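/- (Theorem 12) Let 0 < θ, θ₀ < 1, 0 < q₀, r₀, r₁, r ≤ ∞, a, a₀, b₀, b₁ ∈ SV, ‖s^{-1/r₀} b₀(s)/a₀(s)‖_{r₀,(1,∞)} < ∞, and ‖s^{-1/r₁} b₁(s)‖_{r₁,(0,1)} < ∞. Put c₀(t) = a₀(t) ‖s^{-1/r₀} b₀(s)/a₀(s)‖_{r₀,(t,∞)}, c₁(t) = ‖s^{-1/r₁} b₁(s)‖_{r₁,(0,t)}, and ρ(t) = t^{1-θ₀} c₀(t)/c₁(t). Then (Ā^𝓛_{θ₀,r₀,b₀,q₀,a₀}, Ā_{1,r₁;b₁})_{θ,r;a} ≅ Ā_{η,r;a^#}, where η = (1-θ)θ₀ + θ and a^#(t) = c₀(t)^{1-θ} c₁(t)^θ a(ρ(t)). -/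

import Mathlib

open MeasureTheory Set ENNReal Filter

noncomputable section

/-- The `L_q` quasi-norm (with respect to Lebesgue measure) of an `ℝ≥0∞`-valued
function over a set of reals; for `q = ∞` it is the essential supremum. -/
def LqNorm (q : ℝ≥0∞) (s : Set ℝ) (g : ℝ → ℝ≥0∞) : ℝ≥0∞ :=
  if q = ∞ then essSup g (volume.restrict s)
  else (∫⁻ t in s, g t ^ q.toReal) ^ q⁻¹.toReal

/-- The weight `s ↦ s ^ (-1/r) * b s`, as an `ℝ≥0∞`-valued function
(`1/∞ = 0` by convention). -/
def svWgt (r : ℝ≥0∞) (b : ℝ → ℝ) : ℝ → ℝ≥0∞ :=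
  fun s => ENNReal.ofReal (s ^ (-(r⁻¹.toReal)) * b s)

/-- `f` and `g` are equivalent on `s`: each is bounded by a constant multiple
of the other there. -/
def EquivOn (s : Set ℝ) (f g : ℝ → ℝ) : Prop :=
  ∃ C : ℝ, 0 < C ∧ ∀ t ∈ s, C⁻¹ * g t ≤ f t ∧ f t ≤ C * g t

/-- A positive measurable function `b` on `(0,∞)` is slowly varying if for every
`ε > 0`, `t ^ ε * b t` is equivalent to a non-decreasing function and
`t ^ (-ε) * b t` is equivalent to a non-increasing function. -/
def SlowlyVarying (b : ℝ → ℝ) : Prop :=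
  AEMeasurable b (volume.restrict (Ioi 0)) ∧ (∀ t ∈ Ioi (0:ℝ), 0 < b t) ∧
    ∀ ε : ℝ, 0 < ε →
      (∃ g : ℝ → ℝ, MonotoneOn g (Ioi 0) ∧ EquivOn (Ioi 0) (fun t => t ^ ε * b t) g) ∧
      (∃ g : ℝ → ℝ, AntitoneOn g (Ioi 0) ∧ EquivOn (Ioi 0) (fun t => t ^ (-ε) * b t) g)

/-- A quasi-Banach space continuously embedded into the ambient (Hausdorff) space `E`,
recorded via its extended-real-valued quasi-norm; the space itself is the set of
vectors of finite quasi-norm. -/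
structure QuasiBanach (E : Type*) [AddCommGroup E] [Module ℝ E] where
  N : E → ℝ≥0∞
  zero : N 0 = 0
  definite : ∀ x, N x = 0 → x = 0
  smul : ∀ (c : ℝ) (x : E), N (c • x) = ENNReal.ofReal |c| * N x
  quasi : ∃ C : ℝ≥0∞, 1 ≤ C ∧ C ≠ ∞ ∧ ∀ x y, N (x + y) ≤ C * (N x + N y)
  complete : ∀ f : ℕ → E,
    (∀ ε : ℝ≥0∞, 0 < ε → ∃ M : ℕ, ∀ m ≥ M, ∀ n ≥ M, N (f m - f n) < ε) →
    (∀ n, N (f n) ≠ ∞) →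
    ∃ g : E, N g ≠ ∞ ∧ Tendsto (fun n => N (f n - g)) atTop (nhds 0)

variable {E : Type*} [AddCommGroup E] [Module ℝ E]

/-- The Peetre K-functional of the couple whose quasi-norms are `N₀`, `N₁`. -/
def Kf (N₀ N₁ : E → ℝ≥0∞) (t : ℝ) (f : E) : ℝ≥0∞ :=
  ⨅ g : E, N₀ g + ENNReal.ofReal t * N₁ (f - g)

/-- The quasi-norm of the real interpolation space `Ā_{θ,q;b}`. -/
def normK (N₀ N₁ : E → ℝ≥0∞) (θ : ℝ) (q : ℝ≥0∞) (b : ℝ → ℝ) (f : E) : ℝ≥0∞ :=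
  LqNorm q (Ioi 0) fun u =>
    ENNReal.ofReal (u ^ (-θ - q⁻¹.toReal) * b u) * Kf N₀ N₁ u f

/-- The quasi-norm of the limiting interpolation space `Ā^𝓛_{σ,r,b,q,a}`. -/
def normL (N₀ N₁ : E → ℝ≥0∞) (σ : ℝ) (r q : ℝ≥0∞) (b a : ℝ → ℝ) (f : E) : ℝ≥0∞ :=
  LqNorm r (Ioi 0) fun t =>
    ENNReal.ofReal (t ^ (-(r⁻¹.toReal)) * (b t / a t)) *
      LqNorm q (Ioo 0 t) fun u =>
        ENNReal.ofReal (u ^ (-σ - q⁻¹.toReal) * a u) * Kf N₀ N₁ u f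

/-- The quasi-norm of the limiting interpolation space `Ā^𝓡_{σ,r,b,q,a}`. -/
def normR (N₀ N₁ : E → ℝ≥0∞) (σ : ℝ) (r q : ℝ≥0∞) (b a : ℝ → ℝ) (f : E) : ℝ≥0∞ :=
  LqNorm r (Ioi 0) fun t =>
    ENNReal.ofReal (t ^ (-(r⁻¹.toReal)) * (b t / a t)) *
      LqNorm q (Ioi t) fun u =>
        ENNReal.ofReal (u ^ (-σ - q⁻¹.toReal) * a u) * Kf N₀ N₁ u f

/-- Two (extended-real-valued) quasi-norms define the same space with
equivalent quasi-norms. -/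
def EquivNorms (nX nY : E → ℝ≥0∞) : Prop :=
  ∃ C : ℝ≥0∞, 0 < C ∧ C ≠ ∞ ∧ ∀ f : E, C⁻¹ * nY f ≤ nX f ∧ nX f ≤ C * nY f

/-! In the variable `x = log t` a slowly varying weight changes by at most `C_ε * exp (ε * d)` over
a distance `d`, for every `ε > 0`, and a K-functional by at most `exp d`. Both end spaces are then
described by one weight each, `exp (-θ₀ * x) * c₀` for the `𝓛`-space and `exp (-x) * c₁` for
`Ā_{1,r₁;b₁}`: the weight at `x` times the K-functional at `x` is dominated by the quasi-norm, and
conversely an element whose K-functional stays below a fixed profile centred at `x` has quasi-norm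
at most a multiple of the weight at `x`. Splitting `f` nearly optimally at `x` turns one profile
for `f` into such profiles for the two summands. With `ρ` the quotient of the two weights, the
K-functional of the end spaces at `ρ` is therefore comparable to `t ^ (-θ₀) * c₀ t * K(t, f)`, up
to a smoothing of `K(·, f)` by a kernel that decays exponentially in `x`. The smoothing is harmless
in every `L_r`, and on the logarithmic scale `t ↦ ρ t` is an increasing quasi-isometry; both facts
follow by sampling on a lattice, which is what makes the argument work for all `0 < r ≤ ∞`. -/

/-- The exponential as an `ℝ≥0∞`-valued function. -/
def eexp (x : ℝ) : ℝ≥0∞ := ENNReal.ofReal (Real.exp x)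

section Exponential

variable {x y : ℝ}

lemma eexp_ne_zero : eexp x ≠ 0 := (ENNReal.ofReal_pos.2 (Real.exp_pos x)).ne'

lemma eexp_ne_top : eexp x ≠ ∞ := ENNReal.ofReal_ne_top

lemma eexp_zero : eexp 0 = 1 := by simp [eexp]

lemma eexp_add : eexp (x + y) = eexp x * eexp y := by
  rw [eexp, Real.exp_add, ENNReal.ofReal_mul (Real.exp_pos x).le]; rfl

lemma eexp_rpow : eexp x ^ y = eexp (y * x) := by
  rw [eexp, ENNReal.ofReal_rpow_of_pos (Real.exp_pos x), ← Real.exp_mul, mul_comm]; rfl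

lemma eexp_le_eexp (h : x ≤ y) : eexp x ≤ eexp y :=
  ENNReal.ofReal_le_ofReal (Real.exp_le_exp.2 h)

lemma le_of_eexp_le_eexp (h : eexp x ≤ eexp y) : x ≤ y :=
  Real.exp_le_exp.1 ((ENNReal.ofReal_le_ofReal_iff (Real.exp_pos y).le).1 h)

lemma exists_le_eexp {C : ℝ≥0∞} (hC : C ≠ ∞) : ∃ L, C ≤ eexp L :=
  ⟨C.toReal, (ENNReal.le_ofReal_iff_toReal_le hC (Real.exp_pos _).le).2 <|
    (le_add_of_nonneg_right zero_le_one).trans (Real.add_one_le_exp _)⟩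

lemma continuous_eexp : Continuous eexp := ENNReal.continuous_ofReal.comp Real.continuous_exp

end Exponential

/-- `F` changes by at most the factor `C * exp (p * d)` between points at distance `d`. In the
variable `t = exp x` this says that `F` is bounded by powers of the ratio of its arguments. -/
def ExpControlled (C : ℝ≥0∞) (p : ℝ) (F : ℝ → ℝ≥0∞) : Prop :=
  ∀ x y, F x ≤ C * eexp (p * |x - y|) * F y

namespace ExpControlled

variable {C D : ℝ≥0∞} {p q : ℝ} {F G : ℝ → ℝ≥0∞}

lemma eexp_mul (s : ℝ) : ExpControlled 1 |s| fun x => eexp (s * x) := fun x y => by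
  rw [one_mul, ← eexp_add]
  refine eexp_le_eexp ?_
  have := le_abs_self (s * (x - y))
  rw [abs_mul] at this
  linarith

lemma mul (hF : ExpControlled C p F) (hG : ExpControlled D q G) :
    ExpControlled (C * D) (p + q) fun x => F x * G x := fun x y =>
  calc F x * G x ≤ (C * eexp (p * |x - y|) * F y) * (D * eexp (q * |x - y|) * G y) :=
        mul_le_mul' (hF x y) (hG x y)
    _ = C * D * eexp ((p + q) * |x - y|) * (F y * G y) := by rw [add_mul, eexp_add]; ring

lemma rpow (hF : ExpControlled C p F) {s : ℝ} (hs : 0 ≤ s) :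
    ExpControlled (C ^ s) (s * p) fun x => F x ^ s := fun x y =>
  calc F x ^ s ≤ (C * eexp (p * |x - y|) * F y) ^ s := ENNReal.rpow_le_rpow (hF x y) hs
    _ = C ^ s * eexp (s * p * |x - y|) * F y ^ s := by
      rw [ENNReal.mul_rpow_of_nonneg _ _ hs, ENNReal.mul_rpow_of_nonneg _ _ hs, eexp_rpow,
        mul_assoc s]

lemma comp (hF : ExpControlled C p F) (hp : 0 ≤ p) {φ : ℝ → ℝ} {k L : ℝ}
    (hφ : ∀ x y, |φ x - φ y| ≤ k * |x - y| + L) :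
    ExpControlled (C * eexp (p * L)) (p * k) fun x => F (φ x) := fun x y =>
  calc F (φ x) ≤ C * eexp (p * |φ x - φ y|) * F (φ y) := hF _ _
    _ ≤ C * eexp (p * (k * |x - y| + L)) * F (φ y) := by
      gcongr; exact eexp_le_eexp (by gcongr; exact hφ x y)
    _ = C * eexp (p * L) * eexp (p * k * |x - y|) * F (φ y) := by
      rw [mul_add, eexp_add, mul_assoc p]; ring

lemma le_of_abs_sub_le (hF : ExpControlled C p F) (hp : 0 ≤ p) {x y d : ℝ} (h : |x - y| ≤ d) :
    F x ≤ C * eexp (p * d) * F y :=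
  (hF x y).trans <| by gcongr; exact eexp_le_eexp (by gcongr)

end ExpControlled

/-- A slowly varying weight in the variable `x = log t`: it is controlled by `exp (ε * d)` for
every `ε > 0`. -/
structure SlowWeight (β : ℝ → ℝ≥0∞) : Prop where
  ne_zero : ∀ x, β x ≠ 0
  ne_top : ∀ x, β x ≠ ∞
  exists_expControlled : ∀ ε : ℝ, 0 < ε → ∃ C ≠ ∞, ExpControlled C ε β

namespace SlowWeight

variable {α β : ℝ → ℝ≥0∞}

lemma mul (hα : SlowWeight α) (hβ : SlowWeight β) : SlowWeight fun x => α x * β x where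
  ne_zero x := mul_ne_zero (hα.ne_zero x) (hβ.ne_zero x)
  ne_top x := ENNReal.mul_ne_top (hα.ne_top x) (hβ.ne_top x)
  exists_expControlled ε hε := by
    obtain ⟨C, hC, hαC⟩ := hα.exists_expControlled (ε / 2) (half_pos hε)
    obtain ⟨D, hD, hβD⟩ := hβ.exists_expControlled (ε / 2) (half_pos hε)
    exact ⟨C * D, ENNReal.mul_ne_top hC hD, by simpa only [add_halves] using hαC.mul hβD⟩

lemma inv (hβ : SlowWeight β) : SlowWeight fun x => (β x)⁻¹ where
  ne_zero x := ENNReal.inv_ne_zero.2 (hβ.ne_top x)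
  ne_top x := ENNReal.inv_ne_top.2 (hβ.ne_zero x)
  exists_expControlled ε hε := by
    obtain ⟨C, hC, hβC⟩ := hβ.exists_expControlled ε hε
    refine ⟨C, hC, fun x y => ?_⟩
    rw [← div_eq_mul_inv, ENNReal.le_div_iff_mul_le (.inl (hβ.ne_zero y)) (.inl (hβ.ne_top y)),
      mul_comm, ← div_eq_mul_inv, ENNReal.div_le_iff (hβ.ne_zero x) (hβ.ne_top x), abs_sub_comm]
    exact hβC y x

lemma div (hα : SlowWeight α) (hβ : SlowWeight β) : SlowWeight fun x => α x / β x := by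
  simpa only [div_eq_mul_inv] using hα.mul hβ.inv

lemma rpow (hβ : SlowWeight β) {s : ℝ} (hs : 0 < s) : SlowWeight fun x => β x ^ s where
  ne_zero x := (ENNReal.rpow_pos (pos_iff_ne_zero.2 (hβ.ne_zero x)) (hβ.ne_top x)).ne'
  ne_top x := ENNReal.rpow_ne_top_of_nonneg hs.le (hβ.ne_top x)
  exists_expControlled ε hε := by
    obtain ⟨C, hC, hβC⟩ := hβ.exists_expControlled (ε / s) (div_pos hε hs)
    refine ⟨C ^ s, ENNReal.rpow_ne_top_of_nonneg hs.le hC, ?_⟩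
    simpa only [mul_div_cancel₀ ε hs.ne'] using hβC.rpow hs.le

lemma comp (hβ : SlowWeight β) {φ : ℝ → ℝ} {k L : ℝ} (hk : 0 < k)
    (hφ : ∀ x y, |φ x - φ y| ≤ k * |x - y| + L) : SlowWeight fun x => β (φ x) where
  ne_zero x := hβ.ne_zero _
  ne_top x := hβ.ne_top _
  exists_expControlled ε hε := by
    obtain ⟨C, hC, hβC⟩ := hβ.exists_expControlled (ε / k) (div_pos hε hk)
    refine ⟨C * eexp (ε / k * L), ENNReal.mul_ne_top hC eexp_ne_top, ?_⟩
    simpa only [div_mul_cancel₀ ε hk.ne'] using hβC.comp (div_pos hε hk).le hφ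

end SlowWeight

lemma EquivOn.exists_le_exp_mul {b g : ℝ → ℝ} {s : ℝ}
    (h : EquivOn (Ioi 0) (fun t => t ^ s * b t) g) :
    ∃ C, 0 ≤ C ∧ ∀ x y, g (Real.exp x) ≤ g (Real.exp y) →
      b (Real.exp x) ≤ C * Real.exp (s * (y - x)) * b (Real.exp y) := by
  obtain ⟨C, hC, hbg⟩ := h
  refine ⟨C * C, mul_nonneg hC.le hC.le, fun x y hg => ?_⟩
  have upper : Real.exp (x * s) * b (Real.exp x) ≤ C * g (Real.exp x) := by
    rw [Real.exp_mul]; exact (hbg _ (Real.exp_pos x)).2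
  have lower : g (Real.exp y) ≤ C * (Real.exp (y * s) * b (Real.exp y)) := by
    rw [Real.exp_mul]; exact (inv_mul_le_iff₀ hC).1 (hbg _ (Real.exp_pos y)).1
  have h := upper.trans (mul_le_mul_of_nonneg_left (hg.trans lower) hC.le)
  rw [mul_comm, ← le_div_iff₀ (Real.exp_pos _)] at h
  rw [show s * (y - x) = y * s - x * s by ring, Real.exp_sub]
  exact h.trans_eq (by ring)

lemma SlowlyVarying.pos_exp {b : ℝ → ℝ} (hb : SlowlyVarying b) (x : ℝ) : 0 < b (Real.exp x) :=
  hb.2.1 _ (Real.exp_pos x)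

lemma SlowlyVarying.slowWeight {b : ℝ → ℝ} (hb : SlowlyVarying b) :
    SlowWeight fun x => ENNReal.ofReal (b (Real.exp x)) := by
  refine ⟨fun x => (ENNReal.ofReal_pos.2 (hb.pos_exp x)).ne', fun x => ENNReal.ofReal_ne_top,
    fun ε hε => ?_⟩
  obtain ⟨⟨g, hg, hbg⟩, k, hk, hbk⟩ := hb.2.2 ε hε
  obtain ⟨C, hC, hgC⟩ := hbg.exists_le_exp_mul
  obtain ⟨D, -, hkD⟩ := hbk.exists_le_exp_mul
  refine ⟨ENNReal.ofReal (max C D), ENNReal.ofReal_ne_top, fun x y => ?_⟩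
  have hby := hb.pos_exp y
  rw [eexp, ← ENNReal.ofReal_mul (le_max_of_le_left hC), ← ENNReal.ofReal_mul (by positivity)]
  refine ENNReal.ofReal_le_ofReal ?_
  rcases le_total x y with h | h
  · calc b (Real.exp x) ≤ C * Real.exp (ε * (y - x)) * b (Real.exp y) :=
          hgC x y (hg (Real.exp_pos x) (Real.exp_pos y) (Real.exp_le_exp.2 h))
      _ ≤ max C D * Real.exp (ε * |x - y|) * b (Real.exp y) := by
        rw [abs_sub_comm, abs_of_nonneg (sub_nonneg.2 h)]
        gcongr
        exact le_max_left C D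
  · calc b (Real.exp x) ≤ D * Real.exp (-ε * (y - x)) * b (Real.exp y) :=
          hkD x y (hk (Real.exp_pos y) (Real.exp_pos x) (Real.exp_le_exp.2 h))
      _ ≤ max C D * Real.exp (ε * |x - y|) * b (Real.exp y) := by
        rw [abs_of_nonneg (sub_nonneg.2 h), neg_mul, ← mul_neg, neg_sub]
        gcongr
        exact le_max_right C D

section ELpNorm

variable {X : Type*} [MeasurableSpace X] {μ ν : Measure X} {q : ℝ≥0∞} {f g : X → ℝ≥0∞} {c : ℝ≥0∞}

lemma eLpNorm_mono_ae_ennreal (h : ∀ᵐ x ∂μ, f x ≤ g x) : eLpNorm f q μ ≤ eLpNorm g q μ :=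
  eLpNorm_mono_enorm_ae (by simpa only [enorm_eq_self] using h)

lemma eLpNorm_const_mul_ennreal (hc : c ≠ ∞) :
    eLpNorm (fun x => c * f x) q μ = c * eLpNorm f q μ := by
  rcases eq_or_ne q 0 with rfl | hq₀
  · simp only [eLpNorm_exponent_zero, mul_zero]
  rcases eq_or_ne q ∞ with rfl | hq
  · simp only [eLpNorm_exponent_top, eLpNormEssSup_eq_essSup_enorm, enorm_eq_self,
      ENNReal.essSup_const_mul]
  have hq' : 0 < q.toReal := ENNReal.toReal_pos hq₀ hq
  simp only [eLpNorm_eq_lintegral_rpow_enorm_toReal hq₀ hq, enorm_eq_self,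
    ENNReal.mul_rpow_of_nonneg _ _ hq'.le]
  rw [lintegral_const_mul' _ _ (ENNReal.rpow_ne_top_of_nonneg hq'.le hc),
    ENNReal.mul_rpow_of_nonneg _ _ (by positivity), ← ENNReal.rpow_mul,
    mul_one_div_cancel hq'.ne', ENNReal.rpow_one]

lemma eLpNorm_le_const_mul (hc : c ≠ ∞) (h : ∀ᵐ x ∂μ, f x ≤ c * g x) :
    eLpNorm f q μ ≤ c * eLpNorm g q μ :=
  (eLpNorm_mono_ae_ennreal h).trans_eq (eLpNorm_const_mul_ennreal hc)

lemma const_mul_eLpNorm_le (h : ∀ᵐ x ∂μ, c * f x ≤ g x) :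
    c * eLpNorm f q μ ≤ eLpNorm g q μ := by
  have of_ne_top {d : ℝ≥0∞} (hd : d ≠ ∞) (hdc : d ≤ c) : d * eLpNorm f q μ ≤ eLpNorm g q μ := by
    rw [← eLpNorm_const_mul_ennreal hd]
    exact eLpNorm_mono_ae_ennreal (h.mono fun x hx => (mul_le_mul_left hdc _).trans hx)
  rcases eq_or_ne c ∞ with rfl | hc
  · rw [← ENNReal.iSup_natCast, ENNReal.iSup_mul]
    exact iSup_le fun n => of_ne_top (ENNReal.natCast_ne_top n) le_top
  · exact of_ne_top hc le_rfl

lemma eLpNorm_add_measure_le : eLpNorm f q (μ + ν) ≤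
    2 ^ (1 / q.toReal) * (eLpNorm f q μ + eLpNorm f q ν) := by
  rcases eq_or_ne q 0 with rfl | hq₀
  · simp only [eLpNorm_exponent_zero, zero_le]
  rcases eq_or_ne q ∞ with rfl | hq
  · simp only [eLpNorm_exponent_top, eLpNormEssSup_eq_essSup_enorm, enorm_eq_self,
      ENNReal.toReal_top, _root_.div_zero, ENNReal.rpow_zero, one_mul]
    refine essSup_le_of_ae_le _ (ae_add_measure_iff.2
      ⟨(ENNReal.ae_le_essSup f).mono fun x hx => ?_, (ENNReal.ae_le_essSup f).mono fun x hx => ?_⟩)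
    · exact hx.trans le_self_add
    · exact hx.trans le_add_self
  have hq' : 0 < q.toReal := ENNReal.toReal_pos hq₀ hq
  simp only [eLpNorm_eq_lintegral_rpow_enorm_toReal hq₀ hq, enorm_eq_self, lintegral_add_measure]
  set A := ∫⁻ x, f x ^ q.toReal ∂μ
  set B := ∫⁻ x, f x ^ q.toReal ∂ν
  have hs : 0 ≤ 1 / q.toReal := by positivity
  calc (A + B) ^ (1 / q.toReal) ≤ (2 * max A B) ^ (1 / q.toReal) := by
        rw [two_mul]; gcongr <;> simp
    _ = 2 ^ (1 / q.toReal) * max (A ^ (1 / q.toReal)) (B ^ (1 / q.toReal)) := by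
      rw [ENNReal.mul_rpow_of_nonneg _ _ hs, (ENNReal.monotone_rpow_of_nonneg hs).map_max]
    _ ≤ _ := by gcongr; exact max_le le_self_add le_add_self

end ELpNorm

section LogarithmicVariable

lemma volume_exp_image_eq_zero_iff {s : Set ℝ} : volume (Real.exp '' s) = 0 ↔ volume s = 0 := by
  refine ⟨fun h => ?_, addHaar_image_eq_zero_of_differentiableOn_of_addHaar_eq_zero _
    Real.differentiable_exp.differentiableOn⟩
  have hlog : DifferentiableOn ℝ Real.log (Real.exp '' s) := by
    rintro _ ⟨x, -, rfl⟩
    exact (Real.differentiableAt_log (Real.exp_pos x).ne').differentiableWithinAt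
  simpa only [image_image, Real.log_exp, image_id'] using
    addHaar_image_eq_zero_of_differentiableOn_of_addHaar_eq_zero _ hlog h

lemma ae_restrict_exp_image_iff {s : Set ℝ} (hs : MeasurableSet s) {P : ℝ → Prop} :
    (∀ᵐ t ∂volume.restrict (Real.exp '' s), P t) ↔ ∀ᵐ x ∂volume.restrict s, P (Real.exp x) := by
  have himage : MeasurableSet (Real.exp '' s) :=
    hs.image_of_continuousOn_injOn Real.continuous_exp.continuousOn Real.exp_injective.injOn
  rw [ae_restrict_iff' himage, ae_restrict_iff' hs, ae_iff, ae_iff,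
    ← volume_exp_image_eq_zero_iff (s := {x | ¬(x ∈ s → P (Real.exp x))})]
  congr! 2
  ext t
  simp only [mem_image, mem_ofPred_eq, Classical.not_imp]
  constructor
  · rintro ⟨⟨x, hx, rfl⟩, h⟩; exact ⟨x, ⟨hx, h⟩, rfl⟩
  · rintro ⟨x, ⟨hx, h⟩, rfl⟩; exact ⟨⟨x, hx, rfl⟩, h⟩

lemma LqNorm_exp_image {q : ℝ≥0∞} (hq : 0 < q) {s : Set ℝ} (hs : MeasurableSet s)
    {g : ℝ → ℝ≥0∞} {G : ℝ → ℝ≥0∞}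
    (hg : ∀ x, g (Real.exp x) = eexp (-(q⁻¹.toReal * x)) * G x) :
    LqNorm q (Real.exp '' s) g = eLpNorm G q (volume.restrict s) := by
  rcases eq_or_ne q ∞ with rfl | hq'
  · have hgG : ∀ x, g (Real.exp x) = G x := by simpa [eexp_zero] using hg
    simp only [LqNorm, if_true, eLpNorm_exponent_top, eLpNormEssSup_eq_essSup_enorm, enorm_eq_self,
      essSup, limsup_eq, ae_restrict_exp_image_iff hs, hgG]
  have hq₀ : 0 < q.toReal := ENNReal.toReal_pos hq.ne' hq'
  rw [LqNorm, if_neg hq', eLpNorm_eq_lintegral_rpow_enorm_toReal hq.ne' hq', ENNReal.toReal_inv,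
    ← one_div, lintegral_image_eq_lintegral_abs_deriv_mul hs
      (fun x _ => (Real.hasDerivAt_exp x).hasDerivWithinAt) Real.exp_injective.injOn]
  congr 1
  refine lintegral_congr fun x => ?_
  rw [hg, ENNReal.mul_rpow_of_nonneg _ _ hq₀.le, eexp_rpow, abs_of_pos (Real.exp_pos x), ← eexp,
    ← mul_assoc, ← eexp_add, ENNReal.toReal_inv, enorm_eq_self, mul_neg,
    mul_inv_cancel_left₀ hq₀.ne', add_neg_cancel, eexp_zero, one_mul]

end LogarithmicVariable

section Lattice

lemma map_floor_div_volume {N : ℝ} (hN : 0 < N) :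
    volume.map (fun x : ℝ => ⌊x / N⌋) = ENNReal.ofReal N • (Measure.count : Measure ℤ) := by
  refine Measure.ext_iff_singleton.2 fun n => ?_
  have hpre : (fun x : ℝ => ⌊x / N⌋) ⁻¹' {n} = Ico (n * N) ((n + 1) * N) := by
    ext x
    rw [mem_preimage, mem_singleton_iff, Int.floor_eq_iff, le_div_iff₀ hN, div_lt_iff₀ hN, mem_Ico]
  rw [Measure.map_apply (by fun_prop) (measurableSet_singleton n), hpre, Real.volume_Ico,
    Measure.smul_apply, Measure.count_singleton, smul_eq_mul, mul_one]
  congr 1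
  ring

lemma eLpNorm_floor_div {N : ℝ} (hN : 0 < N) (q : ℝ≥0∞) (Y : ℤ → ℝ≥0∞) :
    eLpNorm (fun x : ℝ => Y ⌊x / N⌋) q volume =
      ENNReal.ofReal N ^ (1 / q).toReal * eLpNorm Y q Measure.count := by
  rw [← smul_eq_mul, ← eLpNorm_smul_measure_of_ne_zero (ENNReal.ofReal_pos.2 hN).ne',
    ← map_floor_div_volume hN]
  exact (eLpNorm_map_measure (by fun_prop) (by fun_prop)).symm

variable {N : ℝ} {C : ℝ≥0∞} {p : ℝ}

lemma abs_sub_mul_floor_div_le (hN : 0 < N) (x : ℝ) : |x - N * ⌊x / N⌋| ≤ N := by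
  have h₁ := (le_div_iff₀ hN).1 (Int.floor_le (x / N))
  have h₂ := (div_lt_iff₀ hN).1 (Int.lt_floor_add_one (x / N))
  rw [abs_of_nonneg (by linarith)]
  linarith

lemma exists_eLpNorm_le_lattice (hN : 0 < N) (hC : C ≠ ∞) (hp : 0 ≤ p) (q : ℝ≥0∞) :
    ∃ D ≠ ∞, ∀ F : ℝ → ℝ≥0∞, ExpControlled C p F →
      eLpNorm F q volume ≤ D * eLpNorm (fun n : ℤ => F (N * n)) q Measure.count := by
  have hD : C * eexp (p * N) ≠ ∞ := ENNReal.mul_ne_top hC eexp_ne_top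
  refine ⟨C * eexp (p * N) * ENNReal.ofReal N ^ (1 / q).toReal, ENNReal.mul_ne_top hD
    (ENNReal.rpow_ne_top_of_nonneg ENNReal.toReal_nonneg ENNReal.ofReal_ne_top), fun F hF => ?_⟩
  rw [mul_assoc, ← eLpNorm_floor_div hN q fun n : ℤ => F (N * n)]
  exact eLpNorm_le_const_mul hD <| ae_of_all _ fun x =>
    hF.le_of_abs_sub_le hp (abs_sub_mul_floor_div_le hN x)

lemma exists_lattice_le_eLpNorm (hN : 0 < N) (hC : C ≠ ∞) (hp : 0 ≤ p) (q : ℝ≥0∞) :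
    ∃ D ≠ ∞, ∀ F : ℝ → ℝ≥0∞, ExpControlled C p F →
      eLpNorm (fun n : ℤ => F (N * n)) q Measure.count ≤ D * eLpNorm F q volume := by
  have hD : C * eexp (p * N) ≠ ∞ := ENNReal.mul_ne_top hC eexp_ne_top
  set M := ENNReal.ofReal N ^ (1 / q).toReal
  have hM₀ : M ≠ 0 := (ENNReal.rpow_pos (ENNReal.ofReal_pos.2 hN) ENNReal.ofReal_ne_top).ne'
  have hM : M ≠ ∞ := ENNReal.rpow_ne_top_of_nonneg ENNReal.toReal_nonneg ENNReal.ofReal_ne_top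
  refine ⟨M⁻¹ * (C * eexp (p * N)), ENNReal.mul_ne_top (ENNReal.inv_ne_top.2 hM₀) hD,
    fun F hF => ?_⟩
  rw [mul_assoc, ← ENNReal.mul_le_iff_le_inv hM₀ hM,
    ← eLpNorm_floor_div hN q fun n : ℤ => F (N * n)]
  refine eLpNorm_le_const_mul hD <| ae_of_all _ fun x => hF.le_of_abs_sub_le hp ?_
  rw [abs_sub_comm]
  exact abs_sub_mul_floor_div_le hN x

lemma eLpNorm_comp_le_of_injective {ι κ : Type*} [Countable κ] [MeasurableSpace ι]
    [MeasurableSpace κ] [DiscreteMeasurableSpace ι] [DiscreteMeasurableSpace κ]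
    {τ : ι → κ} (hτ : Function.Injective τ) (q : ℝ≥0∞) (Y : κ → ℝ≥0∞) :
    eLpNorm (Y ∘ τ) q Measure.count ≤ eLpNorm Y q Measure.count := by
  have hτm : Measurable τ := Measurable.of_discrete
  rw [← eLpNorm_map_measure (by fun_prop) hτm.aemeasurable]
  refine eLpNorm_mono_measure Y (Measure.le_iff.2 fun s hs => ?_)
  rw [Measure.map_apply hτm hs, ← Measure.count_injective_image hτ]
  exact measure_mono (image_preimage_subset τ s)

/-- Young's inequality for the convolution in which a supremum replaces the sum. -/
lemma eLpNorm_iSup_sub_mul_le {ι : Type*} [AddGroup ι] [MeasurableSpace ι]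
    [MeasurableSingletonClass ι] (q : ℝ≥0∞) (w Y : ι → ℝ≥0∞) :
    eLpNorm (fun n => ⨆ k, w (n - k) * Y k) q Measure.count ≤
      eLpNorm w q Measure.count * eLpNorm Y q Measure.count := by
  rcases eq_or_ne q 0 with rfl | hq₀
  · simp only [eLpNorm_exponent_zero, zero_le]
  rcases eq_or_ne q ∞ with rfl | hq
  · simp only [eLpNorm_exponent_top, eLpNormEssSup_eq_essSup_enorm, enorm_eq_self, essSup_count]
    exact iSup_le fun n => iSup_le fun k => mul_le_mul' (le_iSup w _) (le_iSup Y k)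
  have hq' : 0 < q.toReal := ENNReal.toReal_pos hq₀ hq
  simp only [eLpNorm_eq_lintegral_rpow_enorm_toReal hq₀ hq, enorm_eq_self, lintegral_count]
  rw [← ENNReal.mul_rpow_of_nonneg _ _ (by positivity)]
  gcongr
  calc ∑' n, (⨆ k, w (n - k) * Y k) ^ q.toReal
      ≤ ∑' n, ∑' k, w (n - k) ^ q.toReal * Y k ^ q.toReal := by
        refine ENNReal.tsum_le_tsum fun n => ?_
        rw [← ENNReal.le_rpow_inv_iff hq']
        refine iSup_le fun k => ?_
        rw [ENNReal.le_rpow_inv_iff hq', ENNReal.mul_rpow_of_nonneg _ _ hq'.le]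
        exact ENNReal.le_tsum k
    _ = ∑' k, ∑' n, w (n - k) ^ q.toReal * Y k ^ q.toReal := ENNReal.tsum_comm
    _ = (∑' n, w n ^ q.toReal) * ∑' k, Y k ^ q.toReal := by
        rw [← ENNReal.tsum_mul_left]
        refine tsum_congr fun k => ?_
        rw [ENNReal.tsum_mul_right]
        congr 1
        exact (Equiv.subRight k).tsum_eq fun n => w n ^ q.toReal

lemma eLpNorm_count_eexp_neg_abs_ne_top {ε : ℝ} (hε : 0 < ε) (q : ℝ≥0∞) :
    eLpNorm (fun n : ℤ => eexp (-ε * |(n : ℝ)|)) q Measure.count ≠ ∞ := by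
  rcases eq_or_ne q 0 with rfl | hq₀
  · simp only [eLpNorm_exponent_zero, ne_eq, ENNReal.zero_ne_top, not_false_eq_true]
  rcases eq_or_ne q ∞ with rfl | hq
  · simp only [eLpNorm_exponent_top, eLpNormEssSup_eq_essSup_enorm, enorm_eq_self, essSup_count]
    refine ne_top_of_le_ne_top ENNReal.one_ne_top (iSup_le fun n => ?_)
    rw [← eexp_zero]
    exact eexp_le_eexp (mul_nonpos_of_nonpos_of_nonneg (by linarith) (abs_nonneg _))
  have hq' : 0 < q.toReal := ENNReal.toReal_pos hq₀ hq
  simp only [eLpNorm_eq_lintegral_rpow_enorm_toReal hq₀ hq, enorm_eq_self, lintegral_count,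
    eexp_rpow]
  refine ENNReal.rpow_ne_top_of_nonneg (by positivity) ?_
  have hδ : q.toReal * -ε < 0 := mul_neg_of_pos_of_neg hq' (neg_lt_zero.2 hε)
  have hgeom : Summable fun n : ℕ => Real.exp (q.toReal * -ε * n) := by
    simpa only [mul_comm _ (Nat.cast _ : ℝ)] using Real.summable_exp_nat_mul_iff.2 hδ
  refine Summable.tsum_ofReal_ne_top (Summable.of_nat_of_neg (hgeom.congr fun n => ?_)
    (hgeom.congr fun n => ?_))
  · rw [Int.cast_natCast, Nat.abs_cast, mul_assoc]
  · rw [Int.cast_neg, abs_neg, Int.cast_natCast, Nat.abs_cast, mul_assoc]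

end Lattice

section ExponentialKernel

variable {ε : ℝ}

lemma expControlled_eexp_neg_abs_sub (hε : 0 ≤ ε) (y : ℝ) :
    ExpControlled 1 ε fun x => eexp (-ε * |x - y|) := fun x x' => by
  rw [one_mul, ← eexp_add]
  have := mul_le_mul_of_nonneg_left (abs_sub_le x' x y) hε
  rw [abs_sub_comm x' x] at this
  exact eexp_le_eexp (by linarith)

lemma exists_eLpNorm_eexp_neg_abs_sub_le (hε : 0 < ε) (q : ℝ≥0∞) :
    ∃ C ≠ ∞, ∀ y : ℝ, eLpNorm (fun x => eexp (-ε * |x - y|)) q volume ≤ C := by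
  obtain ⟨D, hD, h⟩ := exists_eLpNorm_le_lattice one_pos ENNReal.one_ne_top hε.le q
  refine ⟨_, ENNReal.mul_ne_top hD (eLpNorm_count_eexp_neg_abs_ne_top hε q), fun y => ?_⟩
  have htranslate : eLpNorm (fun x => eexp (-ε * |x - y|)) q volume =
      eLpNorm (fun x => eexp (-ε * |x - 0|)) q volume := by
    have hmeas : Measurable fun x : ℝ => eexp (-ε * |x - 0|) :=
      (continuous_eexp.comp (by fun_prop)).measurable
    simpa only [Function.comp_def, sub_zero] using eLpNorm_comp_measurePreserving
      hmeas.aestronglyMeasurable (measurePreserving_sub_right volume y)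
  rw [htranslate]
  simpa only [one_mul, sub_zero] using h _ (expControlled_eexp_neg_abs_sub hε.le 0)

/-- The least majorant of `F` that is `ExpControlled 1 ε`; it smooths `F` without changing the
order of magnitude of its norm. -/
def expMajorant (ε : ℝ) (F : ℝ → ℝ≥0∞) (x : ℝ) : ℝ≥0∞ := ⨆ u, eexp (-ε * |u - x|) * F u

lemma expControlled_expMajorant (hε : 0 ≤ ε) (F : ℝ → ℝ≥0∞) :
    ExpControlled 1 ε (expMajorant ε F) := fun x y => by
  refine iSup_le fun u => ?_
  calc eexp (-ε * |u - x|) * F u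
      ≤ 1 * eexp (ε * |x - y|) * eexp (-ε * |u - y|) * F u := by
        gcongr
        simpa only [abs_sub_comm] using expControlled_eexp_neg_abs_sub hε u x y
    _ = 1 * eexp (ε * |x - y|) * (eexp (-ε * |u - y|) * F u) := mul_assoc ..
    _ ≤ _ := by gcongr; exact le_iSup (fun u => eexp (-ε * |u - y|) * F u) u

lemma expMajorant_le_lattice (hε : 0 ≤ ε) {C : ℝ≥0∞} {p : ℝ} (hp : 0 ≤ p) {F : ℝ → ℝ≥0∞}
    (hF : ExpControlled C p F) (x : ℝ) : expMajorant ε F x ≤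
      C * eexp (p + ε) * ⨆ k : ℤ, eexp (-ε * |k - x|) * F k := by
  refine iSup_le fun u => ?_
  have hfloor : |u - ⌊u⌋| ≤ 1 := by
    simpa only [div_one, one_mul] using abs_sub_mul_floor_div_le one_pos u
  calc eexp (-ε * |u - x|) * F u
      ≤ (1 * eexp (ε * 1) * eexp (-ε * |⌊u⌋ - x|)) * (C * eexp (p * 1) * F ⌊u⌋) :=
        mul_le_mul' ((expControlled_eexp_neg_abs_sub hε x).le_of_abs_sub_le hε hfloor)
          (hF.le_of_abs_sub_le hp hfloor)
    _ = C * eexp (p + ε) * (eexp (-ε * |⌊u⌋ - x|) * F ⌊u⌋) := by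
        rw [mul_one, mul_one, eexp_add]; ring
    _ ≤ _ := by gcongr; exact le_iSup (fun k : ℤ => eexp (-ε * |k - x|) * F k) ⌊u⌋

lemma exists_eLpNorm_expMajorant_le (hε : 0 < ε) {C : ℝ≥0∞} (hC : C ≠ ∞) {p : ℝ} (hp : 0 ≤ p)
    (q : ℝ≥0∞) : ∃ D ≠ ∞, ∀ F : ℝ → ℝ≥0∞, ExpControlled C p F →
      eLpNorm (expMajorant ε F) q volume ≤ D * eLpNorm F q volume := by
  obtain ⟨D₁, hD₁, h₁⟩ := exists_eLpNorm_le_lattice one_pos ENNReal.one_ne_top hε.le q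
  obtain ⟨D₂, hD₂, h₂⟩ := exists_lattice_le_eLpNorm one_pos hC hp q
  have hw := eLpNorm_count_eexp_neg_abs_ne_top hε q
  have hK : C * eexp (p + ε) ≠ ∞ := ENNReal.mul_ne_top hC eexp_ne_top
  set W := eLpNorm (fun n : ℤ => eexp (-ε * |(n : ℝ)|)) q Measure.count
  refine ⟨D₁ * (C * eexp (p + ε) * (W * D₂)), by finiteness, fun F hF => ?_⟩
  have h₁' := h₁ _ (expControlled_expMajorant hε.le F)
  have h₂' := h₂ F hF
  simp only [one_mul] at h₁' h₂'
  calc eLpNorm (expMajorant ε F) q volume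
      ≤ D₁ * eLpNorm (fun n : ℤ => expMajorant ε F n) q Measure.count := h₁'
    _ ≤ D₁ * (C * eexp (p + ε) * eLpNorm (fun n : ℤ =>
          ⨆ k : ℤ, eexp (-ε * |((n - k : ℤ) : ℝ)|) * F k) q Measure.count) := by
        gcongr
        refine eLpNorm_le_const_mul hK (ae_of_all _ fun n => ?_)
        simpa only [Int.cast_sub, abs_sub_comm (n : ℝ)] using
          expMajorant_le_lattice hε.le hp hF n
    _ ≤ D₁ * (C * eexp (p + ε) * (W * (D₂ * eLpNorm F q volume))) := by
        gcongr
        exact (eLpNorm_iSup_sub_mul_le q (fun n : ℤ => eexp (-ε * |(n : ℝ)|)) fun k => F k).trans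
          (by gcongr)
    _ = _ := by ring

end ExponentialKernel

section ChangeOfVariable

lemma exists_eLpNorm_le_of_expanding {σ : ℝ → ℝ} {δ L : ℝ} (hδ : 0 < δ)
    (hσ : ∀ x y, δ * |x - y| ≤ |σ x - σ y| + L) {C D E : ℝ≥0∞} (hC : C ≠ ∞) (hD : D ≠ ∞)
    (hE : E ≠ ∞) {p s : ℝ} (hp : 0 ≤ p) (hs : 0 ≤ s) (q : ℝ≥0∞) :
    ∃ B ≠ ∞, ∀ F G : ℝ → ℝ≥0∞, ExpControlled C p F → ExpControlled D s G →
      (∀ x, F x ≤ E * G (σ x)) → eLpNorm F q volume ≤ B * eLpNorm G q volume := by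
  have hL : 0 ≤ L := by simpa using hσ 0 0
  set N := (L + 1) / δ
  have hN : 0 < N := by positivity
  set τ : ℤ → ℤ := fun m => ⌊σ (N * m)⌋
  have hτ : Function.Injective τ := fun m n hmn => by
    have hclose := Int.abs_sub_lt_one_of_floor_eq_floor hmn
    have h := (hσ (N * m) (N * n)).trans_lt (add_lt_add_left hclose L)
    rw [← mul_sub, abs_mul, abs_of_pos hN, ← mul_assoc, mul_div_cancel₀ _ hδ.ne', add_comm 1] at h
    have h' : |(m : ℝ) - n| < 1 := by nlinarith
    have h'' : |m - n| < 1 := by exact_mod_cast h'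
    exact sub_eq_zero.1 (Int.abs_lt_one_iff.1 h'')
  obtain ⟨B₁, hB₁, h₁⟩ := exists_eLpNorm_le_lattice hN hC hp q
  obtain ⟨B₂, hB₂, h₂⟩ := exists_lattice_le_eLpNorm one_pos hD hs q
  have hK : E * (D * eexp s) ≠ ∞ := by have := @eexp_ne_top s; finiteness
  refine ⟨B₁ * (E * (D * eexp s) * B₂), by finiteness, fun F G hF hG hFG => ?_⟩
  have h₂' := h₂ G hG
  simp only [one_mul] at h₂'
  have hle (m : ℤ) : F (N * m) ≤ E * (D * eexp s) * G (τ m) := by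
    have hfloor : |σ (N * m) - τ m| ≤ 1 := by
      simpa only [div_one, one_mul] using abs_sub_mul_floor_div_le one_pos (σ (N * m))
    calc F (N * m) ≤ E * G (σ (N * m)) := hFG _
      _ ≤ E * (D * eexp (s * 1) * G (τ m)) := by gcongr; exact hG.le_of_abs_sub_le hs hfloor
      _ = _ := by rw [mul_one, mul_assoc E]
  calc eLpNorm F q volume ≤ B₁ * eLpNorm (fun m : ℤ => F (N * m)) q Measure.count := h₁ F hF
    _ ≤ B₁ * (E * (D * eexp s) * eLpNorm ((fun n : ℤ => G n) ∘ τ) q Measure.count) := by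
        gcongr; exact eLpNorm_le_const_mul hK (ae_of_all _ hle)
    _ ≤ B₁ * (E * (D * eexp s) * (B₂ * eLpNorm G q volume)) := by
        gcongr; exact (eLpNorm_comp_le_of_injective hτ q _).trans h₂'
    _ = _ := by ring

/-- Increasing quasi-isometries of the line; these are the changes of variable that relate the
parameters of two couples on the logarithmic scale. -/
structure MonoQuasiIsometry (φ : ℝ → ℝ) : Prop where
  exists_lower : ∃ δ > 0, ∃ L, ∀ x y, x ≤ y → δ * (y - x) ≤ φ y - φ x + L
  exists_upper : ∃ k > 0, ∃ L, ∀ x y, |φ x - φ y| ≤ k * |x - y| + L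

namespace MonoQuasiIsometry

variable {φ : ℝ → ℝ}

lemma exists_expanding (hφ : MonoQuasiIsometry φ) :
    ∃ δ > 0, ∃ L, ∀ x y, δ * |x - y| ≤ |φ x - φ y| + L := by
  obtain ⟨δ, hδ, L, h⟩ := hφ.exists_lower
  refine ⟨δ, hδ, L, fun x y => ?_⟩
  wlog hxy : x ≤ y generalizing x y
  · simpa only [abs_sub_comm] using this y x (le_of_not_ge hxy)
  rw [abs_sub_comm, abs_of_nonneg (sub_nonneg.2 hxy), abs_sub_comm]
  exact (h x y hxy).trans (by gcongr; exact le_abs_self _)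

lemma exists_coarse_rightInverse (hφ : MonoQuasiIsometry φ) :
    ∃ M, ∃ σ : ℝ → ℝ, ∀ y, |φ (σ y) - y| ≤ M := by
  obtain ⟨δ, hδ, L, hlow⟩ := hφ.exists_lower
  obtain ⟨k, -, K, hup⟩ := hφ.exists_upper
  suffices h : ∀ y, ∃ x, |φ x - y| ≤ k + K by
    choose σ hσ using h
    exact ⟨_, σ, hσ⟩
  intro y
  have hbdd : ∃ b : ℤ, ∀ n : ℤ, φ n ≤ y → n ≤ b := by
    refine ⟨max 0 ⌈(y - φ 0 + L) / δ⌉, fun n hn => ?_⟩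
    rcases le_total n 0 with h | h
    · exact le_max_of_le_left h
    refine le_max_of_le_right ((Int.cast_le (R := ℝ)).1 (le_trans ?_ (Int.le_ceil _)))
    have := hlow 0 n (Int.cast_nonneg h)
    rw [le_div_iff₀ hδ]
    linarith
  have hne : ∃ n : ℤ, φ n ≤ y := by
    refine ⟨min 0 ⌊(y - φ 0 - L) / δ⌋, ?_⟩
    set n := min 0 ⌊(y - φ 0 - L) / δ⌋
    have hn : (n : ℝ) ≤ (y - φ 0 - L) / δ :=
      (Int.cast_le.2 (min_le_right _ _)).trans (Int.floor_le _)
    have := hlow n 0 (Int.cast_nonpos.2 (min_le_left _ _))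
    rw [le_div_iff₀ hδ] at hn
    linarith
  obtain ⟨n, hn, hmax⟩ := Int.exists_greatest_of_bdd hbdd hne
  have hsucc : y < φ ((n : ℝ) + 1) := by
    by_contra! h
    have := hmax (n + 1) (by exact_mod_cast h)
    omega
  have hstep := (abs_le.1 (hup n (n + 1))).1
  rw [sub_add_cancel_left, abs_neg, abs_one] at hstep
  exact ⟨n, by rw [abs_of_nonpos (by linarith)]; linarith⟩

variable {C D E : ℝ≥0∞} {p s : ℝ}

lemma exists_eLpNorm_le_of_le_comp (hφ : MonoQuasiIsometry φ) (hC : C ≠ ∞) (hD : D ≠ ∞)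
    (hE : E ≠ ∞) (hp : 0 ≤ p) (hs : 0 ≤ s) (q : ℝ≥0∞) :
    ∃ B ≠ ∞, ∀ F G : ℝ → ℝ≥0∞, ExpControlled C p F → ExpControlled D s G →
      (∀ x, F x ≤ E * G (φ x)) → eLpNorm F q volume ≤ B * eLpNorm G q volume := by
  obtain ⟨δ, hδ, L, h⟩ := hφ.exists_expanding
  exact exists_eLpNorm_le_of_expanding hδ h hC hD hE hp hs q

lemma exists_eLpNorm_le_of_comp_le (hφ : MonoQuasiIsometry φ) (hC : C ≠ ∞) (hD : D ≠ ∞)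
    (hE : E ≠ ∞) (hp : 0 ≤ p) (hs : 0 ≤ s) (q : ℝ≥0∞) :
    ∃ B ≠ ∞, ∀ F G : ℝ → ℝ≥0∞, ExpControlled C p F → ExpControlled D s G →
      (∀ x, G (φ x) ≤ E * F x) → eLpNorm G q volume ≤ B * eLpNorm F q volume := by
  obtain ⟨M, σ, hσ⟩ := hφ.exists_coarse_rightInverse
  obtain ⟨k, hk, K, hup⟩ := hφ.exists_upper
  have hexp (x y : ℝ) : k⁻¹ * |x - y| ≤ |σ x - σ y| + k⁻¹ * (2 * M + K) := by
    have h₁ := abs_sub_le x (φ (σ x)) y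
    have h₂ := abs_sub_le (φ (σ x)) (φ (σ y)) y
    have h₃ := hσ x
    rw [abs_sub_comm] at h₃
    have h : |x - y| ≤ k * |σ x - σ y| + (2 * M + K) := by
      linarith [hσ y, hup (σ x) (σ y)]
    rw [inv_mul_le_iff₀ hk, mul_add, mul_inv_cancel_left₀ hk.ne']
    exact h
  have hDE : D * eexp (s * M) * E ≠ ∞ := by have := @eexp_ne_top (s * M); finiteness
  obtain ⟨B, hB, h⟩ :=
    exists_eLpNorm_le_of_expanding (inv_pos.2 hk) hexp hD hC hDE hs hp q
  refine ⟨B, hB, fun F G hF hG hGF => h G F hG hF fun y => ?_⟩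
  calc G y ≤ D * eexp (s * M) * G (φ (σ y)) :=
        hG.le_of_abs_sub_le hs (by rw [abs_sub_comm]; exact hσ y)
    _ ≤ D * eexp (s * M) * (E * F (σ y)) := by gcongr; exact hGF _
    _ = _ := (mul_assoc ..).symm

end MonoQuasiIsometry

end ChangeOfVariable

section TailsAndHeads

/-- The norm of `β` over the half-line to the right of `x`. -/
def tailNorm (q : ℝ≥0∞) (β : ℝ → ℝ≥0∞) (x : ℝ) : ℝ≥0∞ := eLpNorm β q (volume.restrict (Ioi x))

/-- The norm of `β` over the half-line to the left of `x`. -/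
def headNorm (q : ℝ≥0∞) (β : ℝ → ℝ≥0∞) (x : ℝ) : ℝ≥0∞ := eLpNorm β q (volume.restrict (Iio x))

lemma ExpControlled.le_eLpNorm_restrict {C : ℝ≥0∞} (hC : C ≠ ∞) {p : ℝ} (hp : 0 ≤ p)
    {F : ℝ → ℝ≥0∞} (hF : ExpControlled C p F) {q : ℝ≥0∞} (hq : q ≠ 0) {s : Set ℝ} {a x : ℝ}
    (hs : Ioo a (a + 1) ⊆ s) (hax : a ≤ x) (hxa : x ≤ a + 1) :
    F x ≤ C * eexp p * eLpNorm F q (volume.restrict s) := by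
  have hunit : volume (Ioo a (a + 1)) = 1 := by simp
  have hne : volume.restrict (Ioo a (a + 1)) ≠ 0 := by
    rw [Ne, Measure.restrict_eq_zero, hunit]
    exact one_ne_zero
  calc F x = eLpNorm (fun _ => F x) q (volume.restrict (Ioo a (a + 1))) := by
        rw [eLpNorm_const _ hq hne, Measure.restrict_apply_univ, hunit, ENNReal.one_rpow, mul_one,
          enorm_eq_self]
    _ ≤ C * eexp p * eLpNorm F q (volume.restrict (Ioo a (a + 1))) := by
        refine eLpNorm_le_const_mul (ENNReal.mul_ne_top hC eexp_ne_top)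
          (ae_restrict_of_forall_mem measurableSet_Ioo fun u hu => ?_)
        have hxu : |x - u| ≤ 1 := abs_le.2 ⟨by linarith [hu.2], by linarith [hu.1]⟩
        simpa only [mul_one] using hF.le_of_abs_sub_le hp hxu
    _ ≤ _ := by gcongr

lemma eLpNorm_restrict_preimage_sub (x : ℝ) (s : Set ℝ) (q : ℝ≥0∞) (β : ℝ → ℝ≥0∞) :
    eLpNorm β q (volume.restrict ((· - x) ⁻¹' s)) =
      eLpNorm (fun u => β (u + x)) q (volume.restrict s) := by
  have hmp := (measurePreserving_add_right volume x).restrict_preimage_emb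
    (measurableEmbedding_addRight x) ((· - x) ⁻¹' s)
  rw [← preimage_comp] at hmp
  simp only [Function.comp_def, add_sub_cancel_right, preimage_id'] at hmp
  rw [← hmp.map_eq, (measurableEmbedding_addRight x).eLpNorm_map_measure]
  rfl

lemma tailNorm_eq_translate (q : ℝ≥0∞) (β : ℝ → ℝ≥0∞) (x : ℝ) :
    tailNorm q β x = eLpNorm (fun u => β (u + x)) q (volume.restrict (Ioi 0)) := by
  rw [← eLpNorm_restrict_preimage_sub, preimage_sub_const_Ioi, zero_add, tailNorm]

lemma headNorm_eq_translate (q : ℝ≥0∞) (β : ℝ → ℝ≥0∞) (x : ℝ) :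
    headNorm q β x = eLpNorm (fun u => β (u + x)) q (volume.restrict (Iio 0)) := by
  rw [← eLpNorm_restrict_preimage_sub, preimage_sub_const_Iio, zero_add, headNorm]

lemma ExpControlled.eLpNorm_translate {C : ℝ≥0∞} (hC : C ≠ ∞) {p : ℝ} {β : ℝ → ℝ≥0∞}
    (hβ : ExpControlled C p β) (q : ℝ≥0∞) (μ : Measure ℝ) :
    ExpControlled C p fun x => eLpNorm (fun u => β (u + x)) q μ := fun x y =>
  eLpNorm_le_const_mul (ENNReal.mul_ne_top hC eexp_ne_top) <| ae_of_all _ fun u => by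
    simpa only [add_sub_add_left_eq_sub] using hβ (u + x) (u + y)

namespace SlowWeight

variable {β : ℝ → ℝ≥0∞} {q : ℝ≥0∞}

lemma exists_le_tailNorm (hβ : SlowWeight β) (hq : q ≠ 0) :
    ∃ C ≠ ∞, ∀ x, β x ≤ C * tailNorm q β x := by
  obtain ⟨C, hC, hβC⟩ := hβ.exists_expControlled 1 one_pos
  exact ⟨C * eexp 1, ENNReal.mul_ne_top hC eexp_ne_top, fun x =>
    hβC.le_eLpNorm_restrict hC zero_le_one hq Ioo_subset_Ioi_self le_rfl (by linarith)⟩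

lemma exists_le_headNorm (hβ : SlowWeight β) (hq : q ≠ 0) :
    ∃ C ≠ ∞, ∀ x, β x ≤ C * headNorm q β x := by
  obtain ⟨C, hC, hβC⟩ := hβ.exists_expControlled 1 one_pos
  refine ⟨C * eexp 1, ENNReal.mul_ne_top hC eexp_ne_top, fun x =>
    hβC.le_eLpNorm_restrict hC zero_le_one hq (a := x - 1) ?_ (by linarith) (by linarith)⟩
  rw [sub_add_cancel]
  exact Ioo_subset_Iio_self

lemma of_le_of_expControlled (hβ : SlowWeight β) {γ : ℝ → ℝ≥0∞}
    (hle : ∃ C ≠ ∞, ∀ x, β x ≤ C * γ x) (hfin : γ 0 ≠ ∞)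
    (hγ : ∀ C ≠ ∞, ∀ p, ExpControlled C p β → ExpControlled C p γ) : SlowWeight γ where
  ne_zero x h := by
    obtain ⟨C, -, hle⟩ := hle
    exact hβ.ne_zero x (by simpa [h] using hle x)
  ne_top x := by
    obtain ⟨C, hC, hβC⟩ := hβ.exists_expControlled 1 one_pos
    exact ne_top_of_le_ne_top
      (ENNReal.mul_ne_top (ENNReal.mul_ne_top hC eexp_ne_top) hfin) (hγ C hC 1 hβC x 0)
  exists_expControlled ε hε := by
    obtain ⟨C, hC, hβC⟩ := hβ.exists_expControlled ε hε
    exact ⟨C, hC, hγ C hC ε hβC⟩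

lemma tail (hβ : SlowWeight β) (hq : q ≠ 0) (hfin : tailNorm q β 0 ≠ ∞) :
    SlowWeight (tailNorm q β) :=
  hβ.of_le_of_expControlled (hβ.exists_le_tailNorm hq) hfin fun C hC p h => by
    simpa only [← tailNorm_eq_translate] using h.eLpNorm_translate hC q (volume.restrict (Ioi 0))

lemma head (hβ : SlowWeight β) (hq : q ≠ 0) (hfin : headNorm q β 0 ≠ ∞) :
    SlowWeight (headNorm q β) :=
  hβ.of_le_of_expControlled (hβ.exists_le_headNorm hq) hfin fun C hC p h => by
    simpa only [← headNorm_eq_translate] using h.eLpNorm_translate hC q (volume.restrict (Iio 0))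

lemma exists_eLpNorm_mul_eexp_neg_abs_sub_le (hβ : SlowWeight β) {γ : ℝ} (hγ : 0 < γ)
    (q : ℝ≥0∞) : ∃ C ≠ ∞, ∀ y,
      eLpNorm (fun x => β x * eexp (-γ * |x - y|)) q volume ≤ C * β y := by
  obtain ⟨C, hC, hβC⟩ := hβ.exists_expControlled (γ / 2) (half_pos hγ)
  obtain ⟨D, hD, hint⟩ := exists_eLpNorm_eexp_neg_abs_sub_le (half_pos hγ) q
  refine ⟨C * D, ENNReal.mul_ne_top hC hD, fun y => ?_⟩
  calc eLpNorm (fun x => β x * eexp (-γ * |x - y|)) q volume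
      ≤ C * β y * eLpNorm (fun x => eexp (-(γ / 2) * |x - y|)) q volume := by
        refine eLpNorm_le_const_mul (ENNReal.mul_ne_top hC (hβ.ne_top y)) (ae_of_all _ fun x => ?_)
        calc β x * eexp (-γ * |x - y|)
            ≤ C * eexp (γ / 2 * |x - y|) * β y * eexp (-γ * |x - y|) := by gcongr; exact hβC x y
          _ = C * β y * (eexp (γ / 2 * |x - y|) * eexp (-γ * |x - y|)) := by ring
          _ = C * β y * eexp (-(γ / 2) * |x - y|) := by rw [← eexp_add]; ring_nf
    _ ≤ C * β y * D := by gcongr; exact hint y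
    _ = _ := by ring

end SlowWeight

end TailsAndHeads

section LogarithmicK

variable {V : Type*} [AddCommGroup V]

/-- The properties of a quasi-norm that are needed to split an element of the sum of a couple:
neither homogeneity nor completeness is required. -/
structure IsQuasiSeminorm (N : V → ℝ≥0∞) : Prop where
  zero : N 0 = 0
  neg : ∀ x, N (-x) = N x
  exists_add_le : ∃ C ≠ ∞, ∀ x y, N (x + y) ≤ C * (N x + N y)

lemma QuasiBanach.isQuasiSeminorm [Module ℝ V] (A : QuasiBanach V) : IsQuasiSeminorm A.N where
  zero := A.zero
  neg x := by simpa using A.smul (-1) x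
  exists_add_le := by
    obtain ⟨C, -, hC, h⟩ := A.quasi
    exact ⟨C, hC, h⟩

/-- The Peetre K-functional of `f` in the variable `x = log t`. -/
def logK (N₀ N₁ : V → ℝ≥0∞) (f : V) (x : ℝ) : ℝ≥0∞ := Kf N₀ N₁ (Real.exp x) f

variable {N₀ N₁ : V → ℝ≥0∞} {f g : V} {x y : ℝ}

lemma logK_le_add (g : V) : logK N₀ N₁ f x ≤ N₀ g + eexp x * N₁ (f - g) := iInf_le _ g

lemma logK_le_left (h₁ : IsQuasiSeminorm N₁) : logK N₀ N₁ f x ≤ N₀ f :=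
  (logK_le_add f).trans_eq (by rw [sub_self, h₁.zero, mul_zero, add_zero])

lemma logK_le_right (h₀ : IsQuasiSeminorm N₀) : logK N₀ N₁ f x ≤ eexp x * N₁ f :=
  (logK_le_add 0).trans_eq (by rw [h₀.zero, sub_zero, zero_add])

lemma exists_add_lt_of_logK_lt {H : ℝ≥0∞} (h : logK N₀ N₁ f x < H) :
    ∃ g, N₀ g + eexp x * N₁ (f - g) < H :=
  iInf_lt_iff.1 h

lemma logK_mono : Monotone (logK N₀ N₁ f) := fun _ _ h =>
  iInf_mono fun _ => by gcongr

lemma logK_le_eexp_mul (h : x ≤ y) : logK N₀ N₁ f y ≤ eexp (y - x) * logK N₀ N₁ f x := by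
  rw [logK, Kf, logK, Kf, ENNReal.mul_iInf_of_ne eexp_ne_zero eexp_ne_top]
  refine iInf_mono fun g => ?_
  rw [← eexp, ← eexp, mul_add, ← mul_assoc, ← eexp_add, sub_add_cancel]
  gcongr
  refine le_mul_of_one_le_left zero_le ?_
  rw [← eexp_zero]
  exact eexp_le_eexp (sub_nonneg.2 h)

lemma expControlled_logK (N₀ N₁ : V → ℝ≥0∞) (f : V) : ExpControlled 1 1 (logK N₀ N₁ f) := by
  intro x y
  rw [one_mul, one_mul]
  rcases le_total x y with h | h
  · refine (logK_mono h).trans (le_mul_of_one_le_left zero_le ?_)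
    rw [← eexp_zero]
    exact eexp_le_eexp (abs_nonneg _)
  · rw [abs_of_nonneg (sub_nonneg.2 h)]
    exact logK_le_eexp_mul h

lemma logK_neg (h₀ : IsQuasiSeminorm N₀) (h₁ : IsQuasiSeminorm N₁) :
    logK N₀ N₁ (-f) x = logK N₀ N₁ f x := by
  rw [logK, Kf, logK, Kf, ← (Equiv.neg V).iInf_comp]
  refine iInf_congr fun g => ?_
  rw [Equiv.neg_apply, h₀.neg, ← h₁.neg (f - g), neg_sub_neg, neg_sub]

lemma exists_logK_add_le (h₀ : IsQuasiSeminorm N₀) (h₁ : IsQuasiSeminorm N₁) :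
    ∃ C ≠ ∞, 1 ≤ C ∧ ∀ f g x, logK N₀ N₁ (f + g) x ≤ C * (logK N₀ N₁ f x + logK N₀ N₁ g x) := by
  obtain ⟨A, hA, hadd₀⟩ := h₀.exists_add_le
  obtain ⟨B, hB, hadd₁⟩ := h₁.exists_add_le
  set C := max 1 (max A B)
  have hC : C ≠ ∞ := max_ne_top one_ne_top (max_ne_top hA hB)
  have hC₀ : C ≠ 0 := (one_pos.trans_le (le_max_left _ _)).ne'
  have hAC : A ≤ C := (le_max_left _ _).trans (le_max_right _ _)
  have hBC : B ≤ C := (le_max_right _ _).trans (le_max_right _ _)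
  refine ⟨C, hC, le_max_left _ _, fun f g x => ?_⟩
  rw [logK.eq_def _ _ f, logK.eq_def _ _ g, Kf, Kf, ENNReal.iInf_add,
    ENNReal.mul_iInf_of_ne hC₀ hC]
  refine le_iInf fun f' => ?_
  rw [ENNReal.add_iInf, ENNReal.mul_iInf_of_ne hC₀ hC]
  refine le_iInf fun g' => ?_
  calc logK N₀ N₁ (f + g) x
      ≤ N₀ (f' + g') + eexp x * N₁ ((f - f') + (g - g')) := by
        rw [sub_add_sub_comm]; exact logK_le_add _
    _ ≤ C * (N₀ f' + N₀ g') + eexp x * (C * (N₁ (f - f') + N₁ (g - g'))) := by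
        gcongr
        · exact (hadd₀ _ _).trans (by gcongr)
        · exact (hadd₁ _ _).trans (by gcongr)
    _ = C * (N₀ f' + eexp x * N₁ (f - f') + (N₀ g' + eexp x * N₁ (g - g'))) := by ring

lemma exists_logK_sub_le (h₀ : IsQuasiSeminorm N₀) (h₁ : IsQuasiSeminorm N₁) :
    ∃ C ≠ ∞, 1 ≤ C ∧ ∀ f g x, logK N₀ N₁ (f - g) x ≤ C * (logK N₀ N₁ f x + logK N₀ N₁ g x) := by
  obtain ⟨C, hC, one_le_C, h⟩ := exists_logK_add_le h₀ h₁
  refine ⟨C, hC, one_le_C, fun f g x => ?_⟩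
  rw [sub_eq_add_neg, ← logK_neg h₀ h₁ (f := g)]
  exact h f (-g) x

/-- The quasi-norm with exponent `q` and weight `exp (-θ * x) * β x` on the line; evaluated at a
K-functional it is the quasi-norm of a real interpolation space. -/
def weightedNorm (θ : ℝ) (q : ℝ≥0∞) (β k : ℝ → ℝ≥0∞) : ℝ≥0∞ :=
  eLpNorm (fun x => eexp (-θ * x) * β x * k x) q volume

/-- The quasi-norm with exponent `r` and weight `ω` of the norms of `exp (-σ * x) * α x * k x` over
the half-lines to the left of a point; evaluated at a K-functional it is the quasi-norm of an
`𝓛`-space. The weight `ω` stands for the quotient `b / a` of the two slowly varying functions. -/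
def cumulativeNorm (σ : ℝ) (r q : ℝ≥0∞) (ω α k : ℝ → ℝ≥0∞) : ℝ≥0∞ :=
  eLpNorm (fun y => ω y * headNorm q (fun x => eexp (-σ * x) * α x * k x) y) r volume

lemma ofReal_exp_rpow_mul (s x c : ℝ) :
    ENNReal.ofReal (Real.exp x ^ s * c) = eexp (s * x) * ENNReal.ofReal c := by
  rw [← Real.exp_mul, ENNReal.ofReal_mul (Real.exp_pos _).le, mul_comm x, eexp]

lemma LqNorm_Ioi_svWgt {q : ℝ≥0∞} (hq : 0 < q) (b : ℝ → ℝ) (x : ℝ) :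
    LqNorm q (Ioi (Real.exp x)) (svWgt q b) =
      tailNorm q (fun u => ENNReal.ofReal (b (Real.exp u))) x := by
  rw [← Real.image_exp_Ioi]
  exact LqNorm_exp_image hq measurableSet_Ioi fun u => by
    rw [svWgt, ofReal_exp_rpow_mul, neg_mul]

lemma LqNorm_Ioo_svWgt {q : ℝ≥0∞} (hq : 0 < q) (b : ℝ → ℝ) (x : ℝ) :
    LqNorm q (Ioo 0 (Real.exp x)) (svWgt q b) =
      headNorm q (fun u => ENNReal.ofReal (b (Real.exp u))) x := by
  rw [← Real.image_exp_Iio]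
  exact LqNorm_exp_image hq measurableSet_Iio fun u => by
    rw [svWgt, ofReal_exp_rpow_mul, neg_mul]

lemma ofReal_exp_rpow_sub_mul_mul (s : ℝ) (q : ℝ≥0∞) (x c : ℝ) (k : ℝ≥0∞) :
    ENNReal.ofReal (Real.exp x ^ (-s - q⁻¹.toReal) * c) * k =
      eexp (-(q⁻¹.toReal * x)) * (eexp (-s * x) * ENNReal.ofReal c * k) := by
  rw [ofReal_exp_rpow_mul, sub_mul, sub_eq_neg_add, eexp_add]
  ring

lemma normK_eq_weightedNorm {q : ℝ≥0∞} (hq : 0 < q) (N₀ N₁ : V → ℝ≥0∞) (θ : ℝ) (b : ℝ → ℝ)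
    (f : V) : normK N₀ N₁ θ q b f =
      weightedNorm θ q (fun x => ENNReal.ofReal (b (Real.exp x))) (logK N₀ N₁ f) := by
  rw [normK, ← Real.range_exp, ← image_univ, weightedNorm, ← Measure.restrict_univ (μ := volume)]
  exact LqNorm_exp_image hq .univ fun x => ofReal_exp_rpow_sub_mul_mul ..

lemma normL_eq_cumulativeNorm {r q : ℝ≥0∞} (hr : 0 < r) (hq : 0 < q) (N₀ N₁ : V → ℝ≥0∞) (σ : ℝ)
    (b a : ℝ → ℝ) (f : V) : normL N₀ N₁ σ r q b a f =
      cumulativeNorm σ r q (fun x => ENNReal.ofReal (b (Real.exp x) / a (Real.exp x)))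
        (fun x => ENNReal.ofReal (a (Real.exp x))) (logK N₀ N₁ f) := by
  have inner (x : ℝ) : (LqNorm q (Ioo 0 (Real.exp x)) fun u =>
      ENNReal.ofReal (u ^ (-σ - q⁻¹.toReal) * a u) * Kf N₀ N₁ u f) =
        headNorm q (fun u => eexp (-σ * u) * ENNReal.ofReal (a (Real.exp u)) * logK N₀ N₁ f u)
          x := by
    rw [← Real.image_exp_Iio]
    exact LqNorm_exp_image hq measurableSet_Iio fun u => ofReal_exp_rpow_sub_mul_mul ..
  rw [normL, ← Real.range_exp, ← image_univ, cumulativeNorm,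
    ← Measure.restrict_univ (μ := volume)]
  refine LqNorm_exp_image hr .univ fun x => ?_
  rw [inner, ofReal_exp_rpow_mul, neg_mul, mul_assoc]

end LogarithmicK

section EndpointEstimates

namespace SlowWeight

variable {α β ω : ℝ → ℝ≥0∞} {q r : ℝ≥0∞} {γ : ℝ}

lemma exists_eLpNorm_mul_kernel_le (hβ : SlowWeight β) (hγ : 0 < γ) {s : ℝ → Set ℝ}
    (hs : ∀ x, MeasurableSet (s x))
    (hle : ∃ C ≠ ∞, ∀ x, β x ≤ C * eLpNorm β q (volume.restrict (s x))) :
    ∃ C ≠ ∞, ∀ (κ : ℝ → ℝ≥0∞) (x : ℝ), (∀ y ∈ s x, κ y ≤ 1) →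
      (∀ y ∉ s x, κ y ≤ eexp (-γ * |y - x|)) →
      eLpNorm (fun y => β y * κ y) q volume ≤ C * eLpNorm β q (volume.restrict (s x)) := by
  obtain ⟨A, hA, hβA⟩ := hle
  obtain ⟨B, hB, hβB⟩ := hβ.exists_eLpNorm_mul_eexp_neg_abs_sub_le hγ q
  have h2 : (2 : ℝ≥0∞) ^ (1 / q.toReal) ≠ ∞ :=
    ENNReal.rpow_ne_top_of_nonneg (by positivity) ENNReal.ofNat_ne_top
  refine ⟨2 ^ (1 / q.toReal) * (1 + B * A), by finiteness, fun κ x hin hout => ?_⟩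
  have inside : eLpNorm (fun y => β y * κ y) q (volume.restrict (s x)) ≤
      eLpNorm β q (volume.restrict (s x)) :=
    eLpNorm_mono_ae_ennreal <| ae_restrict_of_forall_mem (hs x) fun y hy =>
      mul_le_of_le_one_right' (hin y hy)
  have outside : eLpNorm (fun y => β y * κ y) q (volume.restrict (s x)ᶜ) ≤
      B * (A * eLpNorm β q (volume.restrict (s x))) :=
    calc eLpNorm (fun y => β y * κ y) q (volume.restrict (s x)ᶜ)
        ≤ eLpNorm (fun y => β y * eexp (-γ * |y - x|)) q (volume.restrict (s x)ᶜ) :=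
          eLpNorm_mono_ae_ennreal <| ae_restrict_of_forall_mem (hs x).compl fun y hy => by
            gcongr; exact hout y hy
      _ ≤ eLpNorm (fun y => β y * eexp (-γ * |y - x|)) q volume :=
          eLpNorm_mono_measure _ Measure.restrict_le_self
      _ ≤ B * β x := hβB x
      _ ≤ _ := by gcongr; exact hβA x
  calc eLpNorm (fun y => β y * κ y) q volume
      = eLpNorm (fun y => β y * κ y) q (volume.restrict (s x) + volume.restrict (s x)ᶜ) := by
        rw [Measure.restrict_add_restrict_compl (hs x)]
    _ ≤ 2 ^ (1 / q.toReal) * (eLpNorm β q (volume.restrict (s x)) +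
          B * (A * eLpNorm β q (volume.restrict (s x)))) :=
        eLpNorm_add_measure_le.trans (by gcongr)
    _ = _ := by ring

lemma exists_eLpNorm_mul_le_tailNorm (hβ : SlowWeight β) (hγ : 0 < γ) (hq : q ≠ 0) :
    ∃ C ≠ ∞, ∀ x, eLpNorm (fun y => β y * eexp (-γ * max (x - y) 0)) q volume ≤
      C * tailNorm q β x := by
  obtain ⟨C, hC, h⟩ := hβ.exists_eLpNorm_mul_kernel_le hγ (fun x => measurableSet_Ioi (a := x))
    (hβ.exists_le_tailNorm hq)
  refine ⟨C, hC, fun x => h _ x (fun y hy => ?_) fun y hy => ?_⟩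
  · rw [max_eq_right (sub_nonpos.2 (le_of_lt hy)), mul_zero, eexp_zero]
  · have hyx := notMem_Ioi.1 hy
    rw [max_eq_left (sub_nonneg.2 hyx), abs_sub_comm, abs_of_nonneg (sub_nonneg.2 hyx)]

lemma exists_eLpNorm_mul_le_headNorm (hβ : SlowWeight β) (hγ : 0 < γ) (hq : q ≠ 0) :
    ∃ C ≠ ∞, ∀ x, eLpNorm (fun y => β y * eexp (-γ * max (y - x) 0)) q volume ≤
      C * headNorm q β x := by
  obtain ⟨C, hC, h⟩ := hβ.exists_eLpNorm_mul_kernel_le hγ (fun x => measurableSet_Iio (a := x))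
    (hβ.exists_le_headNorm hq)
  refine ⟨C, hC, fun x => h _ x (fun y hy => ?_) fun y hy => ?_⟩
  · rw [max_eq_right (sub_nonpos.2 (le_of_lt hy)), mul_zero, eexp_zero]
  · have hxy := notMem_Iio.1 hy
    rw [max_eq_left (sub_nonneg.2 hxy), abs_of_nonneg (sub_nonneg.2 hxy)]

lemma exists_expControlled_weight (hα : SlowWeight α) (σ : ℝ) : ∃ C ≠ ∞, ∀ k : ℝ → ℝ≥0∞,
    ExpControlled 1 1 k → ExpControlled C (|σ| + 1 + 1) fun x => eexp (-σ * x) * α x * k x := by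
  obtain ⟨C, hC, hαC⟩ := hα.exists_expControlled 1 one_pos
  refine ⟨C, hC, fun k hk => ?_⟩
  simpa only [one_mul, mul_one, abs_neg] using ((ExpControlled.eexp_mul (-σ)).mul hαC).mul hk

lemma exists_mul_le_cumulativeNorm (hα : SlowWeight α) (hω : SlowWeight (tailNorm r ω))
    (hq : q ≠ 0) (σ : ℝ) : ∃ C ≠ ∞, ∀ k, ExpControlled 1 1 k → ∀ x,
      eexp (-σ * x) * (α x * tailNorm r ω x) * k x ≤ C * cumulativeNorm σ r q ω α k := by
  obtain ⟨A, hA, hF⟩ := hα.exists_expControlled_weight σ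
  obtain ⟨B, hB, htail⟩ := hω.exists_expControlled 1 one_pos
  have heA : A * eexp (|σ| + 1 + 1) ≠ ∞ := ENNReal.mul_ne_top hA eexp_ne_top
  have heB : B * eexp 1 ≠ ∞ := ENNReal.mul_ne_top hB eexp_ne_top
  refine ⟨B * eexp 1 * (A * eexp (|σ| + 1 + 1)), ENNReal.mul_ne_top heB heA, fun k hk x => ?_⟩
  set F : ℝ → ℝ≥0∞ := fun u => eexp (-σ * u) * α u * k u
  have inner {y : ℝ} (hy : x + 1 < y) :
      F x ≤ A * eexp (|σ| + 1 + 1) * headNorm q F y :=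
    (hF k hk).le_eLpNorm_restrict hA (by positivity) hq
      (Ioo_subset_Iio_self.trans (Iio_subset_Iio hy.le)) le_rfl (by linarith)
  have outer : F x * tailNorm r ω (x + 1) ≤
      A * eexp (|σ| + 1 + 1) * cumulativeNorm σ r q ω α k := by
    rw [cumulativeNorm, ← eLpNorm_const_mul_ennreal heA]
    refine (const_mul_eLpNorm_le ?_).trans (eLpNorm_mono_measure _ Measure.restrict_le_self)
    refine ae_restrict_of_forall_mem measurableSet_Ioi fun y hy => ?_
    calc F x * ω y ≤ A * eexp (|σ| + 1 + 1) * headNorm q F y * ω y := by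
          gcongr; exact inner hy
      _ = _ := by ring
  have hshift : tailNorm r ω x ≤ B * eexp 1 * tailNorm r ω (x + 1) := by
    simpa only [mul_one] using htail.le_of_abs_sub_le zero_le_one (x := x) (y := x + 1) (d := 1)
      (by simp)
  calc eexp (-σ * x) * (α x * tailNorm r ω x) * k x = F x * tailNorm r ω x := by ring
    _ ≤ F x * (B * eexp 1 * tailNorm r ω (x + 1)) := by gcongr
    _ = B * eexp 1 * (F x * tailNorm r ω (x + 1)) := by ring
    _ ≤ B * eexp 1 * (A * eexp (|σ| + 1 + 1) * cumulativeNorm σ r q ω α k) := by gcongr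
    _ = _ := (mul_assoc ..).symm

lemma exists_headNorm_le (hα : SlowWeight α) (hγ : 0 < γ) (q : ℝ≥0∞) (σ : ℝ) :
    ∃ C ≠ ∞, ∀ (k : ℝ → ℝ≥0∞) (x : ℝ) (H : ℝ≥0∞), H ≠ ∞ →
      (∀ u, k u ≤ H * eexp (σ * (u - x) - γ * |u - x|)) → ∀ y,
      headNorm q (fun u => eexp (-σ * u) * α u * k u) y ≤
        C * H * eexp (-σ * x) * α x * eexp (-(γ / 2) * max (x - y) 0) := by
  obtain ⟨C, hC, h⟩ := hα.exists_eLpNorm_mul_eexp_neg_abs_sub_le (half_pos hγ) q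
  refine ⟨C, hC, fun k x H hH hk y => ?_⟩
  set M := H * eexp (-σ * x) * eexp (-(γ / 2) * max (x - y) 0)
  have hM : M ≠ ∞ := by
    have := @eexp_ne_top (-σ * x)
    have := @eexp_ne_top (-(γ / 2) * max (x - y) 0)
    finiteness
  have decay {u : ℝ} (hu : u < y) : -γ * |u - x| ≤
      -(γ / 2) * max (x - y) 0 + -(γ / 2) * |u - x| := by
    have : max (x - y) 0 ≤ |u - x| :=
      max_le (by linarith [neg_le_abs (u - x)]) (abs_nonneg _)
    nlinarith
  calc headNorm q (fun u => eexp (-σ * u) * α u * k u) y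
      ≤ M * eLpNorm (fun u => α u * eexp (-(γ / 2) * |u - x|)) q (volume.restrict (Iio y)) := by
        refine eLpNorm_le_const_mul hM <| ae_restrict_of_forall_mem measurableSet_Iio fun u hu => ?_
        calc eexp (-σ * u) * α u * k u
            ≤ eexp (-σ * u) * α u * (H * eexp (σ * (u - x) - γ * |u - x|)) := by
              gcongr; exact hk u
          _ = H * α u * eexp (-σ * x + -γ * |u - x|) := by
              rw [show -σ * x + -γ * |u - x| = -σ * u + (σ * (u - x) - γ * |u - x|) by ring,
                eexp_add (x := -σ * u)]
              ring
          _ ≤ H * α u * eexp (-σ * x + (-(γ / 2) * max (x - y) 0 + -(γ / 2) * |u - x|)) := by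
              gcongr; exact eexp_le_eexp (by gcongr; exact decay hu)
          _ = M * (α u * eexp (-(γ / 2) * |u - x|)) := by rw [eexp_add, eexp_add]; ring
    _ ≤ M * (C * α x) := by
        gcongr
        exact (eLpNorm_mono_measure _ Measure.restrict_le_self).trans (h x)
    _ = _ := by ring

lemma exists_cumulativeNorm_le (hα : SlowWeight α) (hω : SlowWeight ω) (hγ : 0 < γ) (hr : r ≠ 0)
    (q : ℝ≥0∞) (σ : ℝ) : ∃ C ≠ ∞, ∀ (k : ℝ → ℝ≥0∞) (x : ℝ) (H : ℝ≥0∞), H ≠ ∞ →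
      (∀ u, k u ≤ H * eexp (σ * (u - x) - γ * |u - x|)) →
      cumulativeNorm σ r q ω α k ≤
        C * (H * (eexp (-σ * x) * (α x * tailNorm r ω x))) := by
  obtain ⟨A, hA, hhead⟩ := hα.exists_headNorm_le hγ q σ
  obtain ⟨B, hB, htail⟩ := hω.exists_eLpNorm_mul_le_tailNorm (half_pos hγ) hr
  refine ⟨A * B, ENNReal.mul_ne_top hA hB, fun k x H hH hk => ?_⟩
  have hM : A * H * eexp (-σ * x) * α x ≠ ∞ := by
    have := @eexp_ne_top (-σ * x)
    have := hα.ne_top x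
    finiteness
  calc cumulativeNorm σ r q ω α k
      ≤ A * H * eexp (-σ * x) * α x *
          eLpNorm (fun y => ω y * eexp (-(γ / 2) * max (x - y) 0)) r volume := by
        refine eLpNorm_le_const_mul hM (ae_of_all _ fun y => ?_)
        rw [mul_left_comm]
        gcongr
        exact hhead k x H hH hk y
    _ ≤ A * H * eexp (-σ * x) * α x * (B * tailNorm r ω x) := by gcongr; exact htail x
    _ = _ := by ring

lemma exists_weightedNorm_le (hβ : SlowWeight β) (hγ : 0 < γ) (hr : r ≠ 0) (θ : ℝ) :
    ∃ C ≠ ∞, ∀ (k : ℝ → ℝ≥0∞) (x : ℝ) (H : ℝ≥0∞), H ≠ ∞ →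
      (∀ u, k u ≤ H * eexp (θ * (u - x) - γ * max (u - x) 0)) →
      weightedNorm θ r β k ≤ C * (H * (eexp (-θ * x) * headNorm r β x)) := by
  obtain ⟨C, hC, h⟩ := hβ.exists_eLpNorm_mul_le_headNorm hγ hr
  refine ⟨C, hC, fun k x H hH hk => ?_⟩
  calc weightedNorm θ r β k
      ≤ H * eexp (-θ * x) * eLpNorm (fun u => β u * eexp (-γ * max (u - x) 0)) r volume := by
        refine eLpNorm_le_const_mul (ENNReal.mul_ne_top hH eexp_ne_top) (ae_of_all _ fun u => ?_)
        calc eexp (-θ * u) * β u * k u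
            ≤ eexp (-θ * u) * β u * (H * eexp (θ * (u - x) - γ * max (u - x) 0)) := by
              gcongr; exact hk u
          _ = H * β u * eexp (-θ * u + (θ * (u - x) - γ * max (u - x) 0)) := by
              rw [eexp_add (x := -θ * u)]; ring
          _ = H * β u * eexp (-θ * x + -γ * max (u - x) 0) := by ring_nf
          _ = _ := by rw [eexp_add]; ring
    _ ≤ H * eexp (-θ * x) * (C * headNorm r β x) := by gcongr; exact h x
    _ = _ := by ring

end SlowWeight

lemma mul_headNorm_mul_le_weightedNorm {θ : ℝ} {r : ℝ≥0∞} {β k : ℝ → ℝ≥0∞} {x : ℝ}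
    (hk : ∀ u ≤ x, k x ≤ eexp (θ * (x - u)) * k u) :
    eexp (-θ * x) * headNorm r β x * k x ≤ weightedNorm θ r β k := by
  rw [mul_right_comm]
  refine (const_mul_eLpNorm_le ?_).trans (eLpNorm_mono_measure _ Measure.restrict_le_self)
  refine ae_restrict_of_forall_mem measurableSet_Iio fun u hu => ?_
  calc eexp (-θ * x) * k x * β u ≤ eexp (-θ * x) * (eexp (θ * (x - u)) * k u) * β u := by
        gcongr; exact hk u (le_of_lt hu)
    _ = eexp (-θ * x + θ * (x - u)) * β u * k u := by rw [eexp_add]; ring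
    _ = eexp (-θ * u) * β u * k u := by ring_nf

end EndpointEstimates

lemma EquivNorms.of_le {U : Type*} {nX nY : U → ℝ≥0∞} {A B : ℝ≥0∞} (hA : A ≠ ∞) (hB : B ≠ ∞)
    (hXY : ∀ f, nX f ≤ A * nY f) (hYX : ∀ f, nY f ≤ B * nX f) : EquivNorms nX nY := by
  have hC₀ : 1 + A + B ≠ 0 := by simp
  have hC : 1 + A + B ≠ ∞ := by finiteness
  refine ⟨1 + A + B, pos_iff_ne_zero.2 hC₀, hC, fun f => ⟨?_, (hXY f).trans ?_⟩⟩
  · rw [mul_comm, ← div_eq_mul_inv]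
    refine ENNReal.div_le_of_le_mul' ((hYX f).trans ?_)
    gcongr
    exact le_add_self
  · gcongr
    exact le_add_self.trans le_self_add

section Reiteration

variable {V : Type*} [AddCommGroup V] {N₀ N₁ X₀ X₁ : V → ℝ≥0∞}

/-- `X` is an intermediate functional of the couple `N₀`, `N₁` with weight `W` and profile `m`:
at each point `x` it dominates `W x` times the K-functional, and this is sharp for elements
whose K-functional, normalised at `x`, stays below `u ↦ exp (m (u - x))`. -/
structure InterpolationClass (N₀ N₁ X : V → ℝ≥0∞) (W : ℝ → ℝ≥0∞) (m : ℝ → ℝ) : Prop where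
  exists_mul_logK_le : ∃ C ≠ ∞, ∀ f x, W x * logK N₀ N₁ f x ≤ C * X f
  exists_le : ∃ C ≠ ∞, ∀ f x H, H ≠ ∞ → (∀ u, logK N₀ N₁ f u ≤ H * eexp (m (u - x))) →
    X f ≤ C * (H * W x)

lemma interpolationClass_cumulativeNorm {α ω : ℝ → ℝ≥0∞} (hα : SlowWeight α)
    (hω : SlowWeight ω) {r q : ℝ≥0∞} (hr : r ≠ 0) (hq : q ≠ 0) (hfin : tailNorm r ω 0 ≠ ∞)
    {γ : ℝ} (hγ : 0 < γ) (σ : ℝ) (N₀ N₁ : V → ℝ≥0∞) :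
    InterpolationClass N₀ N₁ (fun f => cumulativeNorm σ r q ω α (logK N₀ N₁ f))
      (fun x => eexp (-σ * x) * (α x * tailNorm r ω x)) fun d => σ * d - γ * |d| where
  exists_mul_logK_le := by
    obtain ⟨C, hC, h⟩ := hα.exists_mul_le_cumulativeNorm (hω.tail hr hfin) hq σ
    exact ⟨C, hC, fun f x => h _ (expControlled_logK N₀ N₁ f) x⟩
  exists_le := by
    obtain ⟨C, hC, h⟩ := hα.exists_cumulativeNorm_le hω hγ hr q σ
    exact ⟨C, hC, fun f => h (logK N₀ N₁ f)⟩

lemma interpolationClass_weightedNorm_one {β : ℝ → ℝ≥0∞} (hβ : SlowWeight β) {r : ℝ≥0∞}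
    (hr : r ≠ 0) {γ : ℝ} (hγ : 0 < γ) (N₀ N₁ : V → ℝ≥0∞) :
    InterpolationClass N₀ N₁ (fun f => weightedNorm 1 r β (logK N₀ N₁ f))
      (fun x => eexp (-1 * x) * headNorm r β x) fun d => 1 * d - γ * max d 0 where
  exists_mul_logK_le := by
    refine ⟨1, one_ne_top, fun f x => ?_⟩
    rw [one_mul]
    refine mul_headNorm_mul_le_weightedNorm fun u hu => ?_
    rw [one_mul]
    exact logK_le_eexp_mul hu
  exists_le := by
    obtain ⟨C, hC, h⟩ := hβ.exists_weightedNorm_le hγ hr 1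
    exact ⟨C, hC, fun f => h (logK N₀ N₁ f)⟩

/-- The compatibility of profiles under which a nearly optimal splitting `f = g + (f - g)` at the
point `x` turns profile `m` for `f` into profile `m₀` for `g` and profile `m₁` for `f - g`. The
profiles `0` and `d ↦ d` that occur here are those of the end spaces of the couple. -/
structure ProfileSplits (m m₀ m₁ : ℝ → ℝ) : Prop where
  nonpos_at_zero : m 0 ≤ 0
  left₀ : ∀ d ≤ 0, max (m d) d ≤ m₀ d
  right₀ : ∀ d, 0 ≤ d → 0 ≤ m₀ d
  left₁ : ∀ d ≤ 0, d ≤ m₁ d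
  right₁ : ∀ d, 0 ≤ d → max (m d) 0 ≤ m₁ d

lemma profileSplits_endpoint {σ η ε : ℝ} (hε : 0 ≤ ε) (hεσ : ε ≤ σ) (hση : σ + 2 * ε ≤ η)
    (hη : η + 2 * ε ≤ 1) : ProfileSplits (fun d => η * d + ε * |d|) (fun d => σ * d - ε * |d|)
      (fun d => 1 * d - ε * max d 0) where
  nonpos_at_zero := by simp
  left₀ d hd := by
    rw [abs_of_nonpos hd]
    exact max_le (by nlinarith) (by nlinarith)
  right₀ d hd := by
    rw [abs_of_nonneg hd]
    nlinarith
  left₁ d hd := by simp [max_eq_right hd]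
  right₁ d hd := by
    rw [abs_of_nonneg hd, max_eq_left hd]
    exact max_le (by nlinarith) (by nlinarith)

lemma exists_logK_le_and_logK_sub_le (h₀ : IsQuasiSeminorm N₀) (h₁ : IsQuasiSeminorm N₁) {f : V}
    {x : ℝ} {H : ℝ≥0∞} (hf : logK N₀ N₁ f x < H) :
    ∃ g, (∀ u, logK N₀ N₁ g u ≤ H) ∧ ∀ u, logK N₀ N₁ (f - g) u ≤ H * eexp (u - x) := by
  obtain ⟨g, hg⟩ := exists_add_lt_of_logK_lt hf
  refine ⟨g, fun u => (logK_le_left h₁).trans (le_self_add.trans hg.le), fun u => ?_⟩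
  calc logK N₀ N₁ (f - g) u ≤ eexp u * N₁ (f - g) := logK_le_right h₀
    _ = eexp (u - x) * (eexp x * N₁ (f - g)) := by
      rw [← mul_assoc, ← eexp_add, sub_add_cancel]
    _ ≤ eexp (u - x) * H := mul_le_mul_right (le_add_self.trans hg.le) _
    _ = H * eexp (u - x) := mul_comm _ _

lemma mul_eexp_add_le {a b c : ℝ} (hac : a ≤ c) (hbc : b ≤ c) (H : ℝ≥0∞) :
    H * eexp a + 2 * H * eexp b ≤ 3 * H * eexp c :=
  calc H * eexp a + 2 * H * eexp b ≤ H * eexp c + 2 * H * eexp c := by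
        gcongr
        exacts [eexp_le_eexp hac, eexp_le_eexp hbc]
    _ = 3 * H * eexp c := by ring

lemma exists_splitting (h₀ : IsQuasiSeminorm N₀) (h₁ : IsQuasiSeminorm N₁) {m m₀ m₁ : ℝ → ℝ}
    (hm : ProfileSplits m m₀ m₁) : ∃ C ≠ ∞, ∀ f x H, H ≠ 0 → H ≠ ∞ →
      (∀ u, logK N₀ N₁ f u ≤ H * eexp (m (u - x))) →
      ∃ g, (∀ u, logK N₀ N₁ g u ≤ C * (3 * H * eexp (m₀ (u - x)))) ∧
        ∀ u, logK N₀ N₁ (f - g) u ≤ C * (3 * H * eexp (m₁ (u - x))) := by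
  obtain ⟨Q, hQ, one_le_Q, hsub⟩ := exists_logK_sub_le h₀ h₁
  refine ⟨Q, hQ, fun f x H hH₀ hH hf => ?_⟩
  have hfx : logK N₀ N₁ f x < 2 * H :=
    calc logK N₀ N₁ f x ≤ H * eexp (m (x - x)) := hf x
      _ ≤ H * eexp 0 := by gcongr; exact eexp_le_eexp (by simpa using hm.nonpos_at_zero)
      _ = H := by rw [eexp_zero, mul_one]
      _ < 2 * H := by rw [two_mul]; exact ENNReal.lt_add_right hH hH₀
  obtain ⟨g, hg, hfg⟩ := exists_logK_le_and_logK_sub_le h₀ h₁ hfx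
  replace hg (u : ℝ) : logK N₀ N₁ g u ≤ 2 * H * eexp 0 := by
    rw [eexp_zero, mul_one]; exact hg u
  have enlarge {a b : ℝ} (hab : a ≤ b) : 2 * H * eexp a ≤ Q * (3 * H * eexp b) :=
    le_add_self.trans <| (mul_eexp_add_le hab hab H).trans (le_mul_of_one_le_left' one_le_Q)
  refine ⟨g, fun u => ?_, fun u => ?_⟩ <;> rcases le_total (u - x) 0 with hu | hu
  · obtain ⟨hm₀, hd₀⟩ := max_le_iff.1 (hm.left₀ _ hu)
    calc logK N₀ N₁ g u = logK N₀ N₁ (f - (f - g)) u := by rw [_root_.sub_sub_cancel]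
      _ ≤ Q * (H * eexp (m (u - x)) + 2 * H * eexp (u - x)) :=
        (hsub _ _ u).trans (by gcongr; exacts [hf u, hfg u])
      _ ≤ _ := mul_le_mul_right (mul_eexp_add_le hm₀ hd₀ H) Q
  · exact (hg u).trans (enlarge (hm.right₀ _ hu))
  · exact (hfg u).trans (enlarge (hm.left₁ _ hu))
  · obtain ⟨hm₁, hd₁⟩ := max_le_iff.1 (hm.right₁ _ hu)
    calc logK N₀ N₁ (f - g) u ≤ Q * (H * eexp (m (u - x)) + 2 * H * eexp 0) :=
        (hsub _ _ u).trans (by gcongr; exacts [hf u, hg u])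
      _ ≤ _ := mul_le_mul_right (mul_eexp_add_le hm₁ hd₁ H) Q

variable {W₀ W₁ : ℝ → ℝ≥0∞} {m m₀ m₁ : ℝ → ℝ} {φ : ℝ → ℝ}

namespace InterpolationClass

lemma exists_mul_logK_le_logK (h₀ : IsQuasiSeminorm N₀) (h₁ : IsQuasiSeminorm N₁)
    (hX₀ : InterpolationClass N₀ N₁ X₀ W₀ m₀) (hX₁ : InterpolationClass N₀ N₁ X₁ W₁ m₁)
    (hφ : ∀ x, eexp (φ x) * W₁ x = W₀ x) :
    ∃ C ≠ ∞, ∀ f x, W₀ x * logK N₀ N₁ f x ≤ C * logK X₀ X₁ f (φ x) := by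
  obtain ⟨Q, hQ, one_le_Q, hadd⟩ := exists_logK_add_le h₀ h₁
  obtain ⟨A, hA, hXA⟩ := hX₀.exists_mul_logK_le
  obtain ⟨B, hB, hXB⟩ := hX₁.exists_mul_logK_le
  have hC : Q * (1 + A + B) ≠ ∞ := by finiteness
  have hC₀ : Q * (1 + A + B) ≠ 0 :=
    mul_ne_zero (one_pos.trans_le one_le_Q).ne' (by simp)
  refine ⟨_, hC, fun f x => ?_⟩
  rw [logK.eq_def X₀, Kf, ENNReal.mul_iInf_of_ne hC₀ hC]
  refine le_iInf fun g => ?_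
  calc W₀ x * logK N₀ N₁ f x
      ≤ W₀ x * (Q * (logK N₀ N₁ g x + logK N₀ N₁ (f - g) x)) := by
        gcongr; simpa only [add_sub_cancel] using hadd g (f - g) x
    _ = Q * (W₀ x * logK N₀ N₁ g x + eexp (φ x) * (W₁ x * logK N₀ N₁ (f - g) x)) := by
        rw [← hφ]; ring
    _ ≤ Q * (A * X₀ g + eexp (φ x) * (B * X₁ (f - g))) := by
        gcongr Q * (?_ + eexp (φ x) * ?_)
        exacts [hXA g x, hXB (f - g) x]
    _ = Q * (A * X₀ g + B * (eexp (φ x) * X₁ (f - g))) := by ring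
    _ ≤ Q * ((1 + A + B) * X₀ g + (1 + A + B) * (eexp (φ x) * X₁ (f - g))) := by
        gcongr
        · exact le_add_self.trans le_self_add
        · exact le_add_self
    _ = _ := by rw [← mul_add, ← mul_assoc]; rfl

lemma exists_logK_le_of_profile (h₀ : IsQuasiSeminorm N₀) (h₁ : IsQuasiSeminorm N₁)
    (hX₀ : InterpolationClass N₀ N₁ X₀ W₀ m₀) (hX₁ : InterpolationClass N₀ N₁ X₁ W₁ m₁)
    (hm : ProfileSplits m m₀ m₁) (hφ : ∀ x, eexp (φ x) * W₁ x = W₀ x) :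
    ∃ C ≠ ∞, ∀ f x H, H ≠ 0 → H ≠ ∞ → (∀ u, logK N₀ N₁ f u ≤ H * eexp (m (u - x))) →
      logK X₀ X₁ f (φ x) ≤ C * (H * W₀ x) := by
  obtain ⟨D, hD, hsplit⟩ := exists_splitting h₀ h₁ hm
  obtain ⟨A, hA, hXA⟩ := hX₀.exists_le
  obtain ⟨B, hB, hXB⟩ := hX₁.exists_le
  refine ⟨(A + B) * (D * 3), by finiteness, fun f x H hH₀ hH hf => ?_⟩
  obtain ⟨g, hg, hfg⟩ := hsplit f x H hH₀ hH hf
  simp only [← mul_assoc] at hg hfg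
  have hDH : D * 3 * H ≠ ∞ := by finiteness
  calc logK X₀ X₁ f (φ x) ≤ X₀ g + eexp (φ x) * X₁ (f - g) := logK_le_add g
    _ ≤ A * (D * 3 * H * W₀ x) + eexp (φ x) * (B * (D * 3 * H * W₁ x)) := by
        gcongr
        exacts [hXA g x _ hDH hg, hXB (f - g) x _ hDH hfg]
    _ = A * (D * 3 * H * W₀ x) + B * (D * 3 * H * (eexp (φ x) * W₁ x)) := by ring
    _ = _ := by rw [hφ]; ring

lemma exists_logK_le_iSup (h₀ : IsQuasiSeminorm N₀) (h₁ : IsQuasiSeminorm N₁)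
    (hX₀ : InterpolationClass N₀ N₁ X₀ W₀ m₀) (hX₁ : InterpolationClass N₀ N₁ X₁ W₁ m₁)
    (hm : ProfileSplits m m₀ m₁) (hφ : ∀ x, eexp (φ x) * W₁ x = W₀ x)
    (hW₀ : ∀ x, W₀ x ≠ 0) (hW_top : ∀ x, W₀ x ≠ ∞) :
    ∃ C ≠ ∞, ∀ f x, logK X₀ X₁ f (φ x) ≤
      C * W₀ x * ⨆ u, eexp (-m (u - x)) * logK N₀ N₁ f u := by
  obtain ⟨C, hC, h⟩ := exists_logK_le_of_profile h₀ h₁ hX₀ hX₁ hm hφ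
  refine ⟨1 + C, by finiteness, fun f x => le_of_forall_gt_imp_ge_of_dense fun a ha => ?_⟩
  set M := ⨆ u, eexp (-m (u - x)) * logK N₀ N₁ f u
  have hK₀ : (1 + C) * W₀ x ≠ 0 := mul_ne_zero (by simp) (hW₀ x)
  have hK : (1 + C) * W₀ x ≠ ∞ := ENNReal.mul_ne_top (by finiteness) (hW_top x)
  rcases eq_or_ne a ∞ with rfl | ha_top
  · exact le_top
  have hMH : M < a / ((1 + C) * W₀ x) :=
    (ENNReal.lt_div_iff_mul_lt (.inl hK₀) (.inl hK)).2 (by rwa [mul_comm])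
  have hprofile (u : ℝ) : logK N₀ N₁ f u ≤ a / ((1 + C) * W₀ x) * eexp (m (u - x)) :=
    calc logK N₀ N₁ f u = eexp (-m (u - x)) * logK N₀ N₁ f u * eexp (m (u - x)) := by
          rw [mul_right_comm, ← eexp_add, neg_add_cancel, eexp_zero, one_mul]
      _ ≤ _ := by
          gcongr
          exact (le_iSup (fun u => eexp (-m (u - x)) * logK N₀ N₁ f u) u).trans hMH.le
  calc logK X₀ X₁ f (φ x) ≤ C * (a / ((1 + C) * W₀ x) * W₀ x) :=
        h f x _ hMH.ne_bot (ENNReal.div_ne_top ha_top hK₀) hprofile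
    _ ≤ (1 + C) * (a / ((1 + C) * W₀ x) * W₀ x) := by gcongr; exact le_add_self
    _ = (1 + C) * W₀ x * (a / ((1 + C) * W₀ x)) := by ring
    _ = a := ENNReal.mul_div_cancel hK₀ hK

end InterpolationClass

lemma SlowWeight.exists_mul_iSup_le_expMajorant {β : ℝ → ℝ≥0∞} (hβ : SlowWeight β) (η : ℝ)
    {ε : ℝ} (hε : 0 < ε) : ∃ C ≠ ∞, ∀ (k : ℝ → ℝ≥0∞) (x : ℝ),
      eexp (-η * x) * β x * (⨆ u, eexp (-(η * (u - x) + ε * |u - x|)) * k u) ≤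
        C * expMajorant (ε / 2) (fun u => eexp (-η * u) * β u * k u) x := by
  obtain ⟨C, hC, hβC⟩ := hβ.exists_expControlled (ε / 2) (half_pos hε)
  refine ⟨C, hC, fun k x => ?_⟩
  rw [expMajorant, ENNReal.mul_iSup, ENNReal.mul_iSup]
  refine iSup_mono fun u => ?_
  calc eexp (-η * x) * β x * (eexp (-(η * (u - x) + ε * |u - x|)) * k u)
      ≤ eexp (-η * x) * (C * eexp (ε / 2 * |u - x|) * β u) *
          (eexp (-(η * (u - x) + ε * |u - x|)) * k u) := by
        gcongr
        rw [abs_sub_comm]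
        exact hβC x u
    _ = C * β u * k u * eexp (-η * x + ε / 2 * |u - x| + -(η * (u - x) + ε * |u - x|)) := by
        rw [eexp_add, eexp_add]; ring
    _ = C * β u * k u * eexp (-(ε / 2) * |u - x| + -η * u) := by ring_nf
    _ = _ := by rw [eexp_add]; ring

namespace InterpolationClass

variable {α β : ℝ → ℝ≥0∞} {ε η θ : ℝ}

lemma exists_weightedNorm_logK_le (h₀ : IsQuasiSeminorm N₀) (h₁ : IsQuasiSeminorm N₁)
    (hε : 0 < ε) (hX₀ : InterpolationClass N₀ N₁ X₀ W₀ m₀)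
    (hX₁ : InterpolationClass N₀ N₁ X₁ W₁ m₁)
    (hm : ProfileSplits (fun d => η * d + ε * |d|) m₀ m₁)
    (hW₀ : ∀ x, W₀ x ≠ 0) (hW_top : ∀ x, W₀ x ≠ ∞)
    (hφ : MonoQuasiIsometry φ) (hφW : ∀ x, eexp (φ x) * W₁ x = W₀ x)
    (hα : SlowWeight α) (hβ : SlowWeight β)
    (hαβ : ∀ x, eexp (-θ * φ x) * α (φ x) * W₀ x = eexp (-η * x) * β x) (r : ℝ≥0∞) :
    ∃ C ≠ ∞, ∀ f, weightedNorm θ r α (logK X₀ X₁ f) ≤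
      C * weightedNorm η r β (logK N₀ N₁ f) := by
  obtain ⟨B, hB, upper⟩ := exists_logK_le_iSup h₀ h₁ hX₀ hX₁ hm hφW hW₀ hW_top
  obtain ⟨M, hM, majorant⟩ := hβ.exists_mul_iSup_le_expMajorant η hε
  obtain ⟨P, hP, hF⟩ := hα.exists_expControlled_weight θ
  obtain ⟨R, hR, hG⟩ := hβ.exists_expControlled_weight η
  obtain ⟨S, hS, norm_majorant⟩ :=
    exists_eLpNorm_expMajorant_le (half_pos hε) hR (p := |η| + 1 + 1) (by positivity) r
  obtain ⟨T, hT, comp_le⟩ := hφ.exists_eLpNorm_le_of_comp_le one_ne_top hP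
    (ENNReal.mul_ne_top hB hM) (half_pos hε).le (s := |θ| + 1 + 1) (by positivity) r
  refine ⟨T * S, ENNReal.mul_ne_top hT hS, fun f => ?_⟩
  have hG' := hG _ (expControlled_logK N₀ N₁ f)
  refine (comp_le _ _ (expControlled_expMajorant (half_pos hε).le _)
    (hF _ (expControlled_logK X₀ X₁ f)) fun x => ?_).trans
      ((mul_le_mul_right (norm_majorant _ hG') T).trans_eq (mul_assoc ..).symm)
  set s := ⨆ u, eexp (-(η * (u - x) + ε * |u - x|)) * logK N₀ N₁ f u
  calc eexp (-θ * φ x) * α (φ x) * logK X₀ X₁ f (φ x)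
      ≤ eexp (-θ * φ x) * α (φ x) * (B * W₀ x * s) := mul_le_mul_right (upper f x) _
    _ = B * (eexp (-η * x) * β x * s) := by rw [← hαβ]; ring
    _ ≤ B * (M * _) := mul_le_mul_right (majorant _ x) B
    _ = _ := (mul_assoc ..).symm

lemma exists_weightedNorm_le_logK (h₀ : IsQuasiSeminorm N₀) (h₁ : IsQuasiSeminorm N₁)
    (hX₀ : InterpolationClass N₀ N₁ X₀ W₀ m₀) (hX₁ : InterpolationClass N₀ N₁ X₁ W₁ m₁)
    (hφ : MonoQuasiIsometry φ) (hφW : ∀ x, eexp (φ x) * W₁ x = W₀ x)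
    (hα : SlowWeight α) (hβ : SlowWeight β)
    (hαβ : ∀ x, eexp (-θ * φ x) * α (φ x) * W₀ x = eexp (-η * x) * β x) (r : ℝ≥0∞) :
    ∃ C ≠ ∞, ∀ f, weightedNorm η r β (logK N₀ N₁ f) ≤
      C * weightedNorm θ r α (logK X₀ X₁ f) := by
  obtain ⟨A, hA, lower⟩ := exists_mul_logK_le_logK h₀ h₁ hX₀ hX₁ hφW
  obtain ⟨P, hP, hF⟩ := hα.exists_expControlled_weight θ
  obtain ⟨R, hR, hG⟩ := hβ.exists_expControlled_weight η
  obtain ⟨U, hU, le_comp⟩ := hφ.exists_eLpNorm_le_of_le_comp hR hP hA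
    (p := |η| + 1 + 1) (s := |θ| + 1 + 1) (by positivity) (by positivity) r
  refine ⟨U, hU, fun f => le_comp _ _ (hG _ (expControlled_logK N₀ N₁ f))
    (hF _ (expControlled_logK X₀ X₁ f)) fun x => ?_⟩
  calc eexp (-η * x) * β x * logK N₀ N₁ f x
      = eexp (-θ * φ x) * α (φ x) * (W₀ x * logK N₀ N₁ f x) := by rw [← hαβ, mul_assoc]
    _ ≤ eexp (-θ * φ x) * α (φ x) * (A * logK X₀ X₁ f (φ x)) := mul_le_mul_right (lower f x) _
    _ = _ := by ring

end InterpolationClass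

end Reiteration

section ExponentialSubstitution

lemma SlowWeight.exists_sub_le_of_eexp_eq {γ : ℝ → ℝ≥0∞} (hγ : SlowWeight γ) {φ : ℝ → ℝ} {s : ℝ}
    (hφ : ∀ x, eexp (φ x) = eexp (s * x) * γ x) {ε : ℝ} (hε : 0 < ε) :
    ∃ L, ∀ x y, φ x - φ y ≤ s * (x - y) + ε * |x - y| + L := by
  obtain ⟨C, hC, hγC⟩ := hγ.exists_expControlled ε hε
  obtain ⟨L, hL⟩ := exists_le_eexp hC
  refine ⟨L, fun x y => sub_le_iff_le_add.2 (le_of_eexp_le_eexp ?_)⟩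
  calc eexp (φ x) ≤ eexp (s * x) * (eexp L * eexp (ε * |x - y|) * γ y) := by
        rw [hφ]; gcongr; exact (hγC x y).trans (by gcongr)
    _ = eexp (s * (x - y) + s * y) * eexp (ε * |x - y|) * eexp L * γ y := by ring_nf
    _ = eexp (s * (x - y) + ε * |x - y| + L + φ y) := by simp only [eexp_add, hφ]; ring

lemma SlowWeight.monoQuasiIsometry {γ : ℝ → ℝ≥0∞} (hγ : SlowWeight γ) {φ : ℝ → ℝ} {s : ℝ}
    (hs : 0 < s) (hφ : ∀ x, eexp (φ x) = eexp (s * x) * γ x) : MonoQuasiIsometry φ where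
  exists_lower := by
    obtain ⟨L, hL⟩ := hγ.exists_sub_le_of_eexp_eq hφ (half_pos hs)
    refine ⟨s / 2, half_pos hs, L, fun x y hxy => ?_⟩
    have := hL x y
    rw [abs_sub_comm, abs_of_nonneg (sub_nonneg.2 hxy)] at this
    linarith
  exists_upper := by
    obtain ⟨L, hL⟩ := hγ.exists_sub_le_of_eexp_eq hφ one_pos
    have upper (x y : ℝ) : φ x - φ y ≤ (s + 1) * |x - y| + L := by
      nlinarith [hL x y, le_abs_self (x - y)]
    exact ⟨s + 1, by positivity, L, fun x y =>
      abs_sub_le_iff.2 ⟨upper x y, abs_sub_comm x y ▸ upper y x⟩⟩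

lemma div_rpow_neg_mul {x y : ℝ≥0∞} (hx : x ≠ 0) (hx' : x ≠ ∞) {θ : ℝ} (hθ : 0 ≤ θ) :
    (x / y) ^ (-θ) * x = x ^ (1 - θ) * y ^ θ := by
  rw [rpow_neg, ← inv_rpow, ENNReal.inv_div (.inr hx') (.inr hx), div_rpow_of_nonneg _ _ hθ,
    rpow_sub _ _ hx hx', rpow_one, div_eq_mul_inv, div_eq_mul_inv]
  ring

variable {γ₀ γ₁ : ℝ → ℝ≥0∞} {φ : ℝ → ℝ} {σ θ : ℝ}

lemma eexp_mul_eq_of_eexp_eq (hγ₁ : SlowWeight γ₁)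
    (hφ : ∀ x, eexp (φ x) = eexp ((1 - σ) * x) * (γ₀ x / γ₁ x)) (x : ℝ) :
    eexp (φ x) * (eexp (-1 * x) * γ₁ x) = eexp (-σ * x) * γ₀ x :=
  calc eexp (φ x) * (eexp (-1 * x) * γ₁ x)
      = eexp ((1 - σ) * x + -1 * x) * (γ₀ x / γ₁ x * γ₁ x) := by rw [hφ, eexp_add]; ring
    _ = eexp (-σ * x) * γ₀ x := by
      rw [ENNReal.div_mul_cancel (hγ₁.ne_zero x) (hγ₁.ne_top x)]; ring_nf

lemma eexp_neg_mul_mul_eq_of_eexp_eq (hγ₀ : SlowWeight γ₀) (hγ₁ : SlowWeight γ₁) (hθ : 0 ≤ θ)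
    (hφ : ∀ x, eexp (φ x) = eexp ((1 - σ) * x) * (γ₀ x / γ₁ x)) (α : ℝ → ℝ≥0∞) (x : ℝ) :
    eexp (-θ * φ x) * α (φ x) * (eexp (-σ * x) * γ₀ x) =
      eexp (-((1 - θ) * σ + θ) * x) * (γ₀ x ^ (1 - θ) * γ₁ x ^ θ * α (φ x)) :=
  calc eexp (-θ * φ x) * α (φ x) * (eexp (-σ * x) * γ₀ x)
      = eexp (-θ * ((1 - σ) * x) + -σ * x) * ((γ₀ x / γ₁ x) ^ (-θ) * γ₀ x * α (φ x)) := by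
        rw [← eexp_rpow, hφ, mul_rpow_of_ne_top eexp_ne_top ((hγ₀.div hγ₁).ne_top x), eexp_rpow,
          eexp_add]
        ring
    _ = _ := by
        rw [div_rpow_neg_mul (hγ₀.ne_zero x) (hγ₀.ne_top x) hθ]; ring_nf

end ExponentialSubstitution

section ReiterationTheorem

variable {V : Type*} [AddCommGroup V] {N₀ N₁ : V → ℝ≥0∞}

theorem equivNorms_weightedNorm_cumulativeNorm (h₀ : IsQuasiSeminorm N₀)
    (h₁ : IsQuasiSeminorm N₁) {θ σ : ℝ} (hθ : 0 < θ) (hθ' : θ < 1) (hσ : 0 < σ) (hσ' : σ < 1)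
    {q₀ r₀ r₁ : ℝ≥0∞} (hq₀ : q₀ ≠ 0) (hr₀ : r₀ ≠ 0) (hr₁ : r₁ ≠ 0) (r : ℝ≥0∞)
    {α α₀ ω β₁ : ℝ → ℝ≥0∞} (hα : SlowWeight α) (hα₀ : SlowWeight α₀) (hω : SlowWeight ω)
    (hβ₁ : SlowWeight β₁) (hfin₀ : tailNorm r₀ ω 0 ≠ ∞) (hfin₁ : headNorm r₁ β₁ 0 ≠ ∞)
    {φ : ℝ → ℝ}
    (hφ : ∀ x, eexp (φ x) =
      eexp ((1 - σ) * x) * (α₀ x * tailNorm r₀ ω x / headNorm r₁ β₁ x)) :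
    EquivNorms
      (fun f => weightedNorm θ r α (logK
        (fun f => cumulativeNorm σ r₀ q₀ ω α₀ (logK N₀ N₁ f))
        (fun f => weightedNorm 1 r₁ β₁ (logK N₀ N₁ f)) f))
      (fun f => weightedNorm ((1 - θ) * σ + θ) r
        (fun x => (α₀ x * tailNorm r₀ ω x) ^ (1 - θ) * headNorm r₁ β₁ x ^ θ * α (φ x))
        (logK N₀ N₁ f)) := by
  set η := (1 - θ) * σ + θ
  have hση : σ < η := by nlinarith
  have hη : η < 1 := by nlinarith
  set ε := min σ (min ((η - σ) / 2) ((1 - η) / 2))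
  have hε : 0 < ε := lt_min hσ (lt_min (by linarith) (by linarith))
  have hεσ : ε ≤ σ := min_le_left _ _
  have hε₀ : ε ≤ (η - σ) / 2 := (min_le_right _ _).trans (min_le_left _ _)
  have hε₁ : ε ≤ (1 - η) / 2 := (min_le_right _ _).trans (min_le_right _ _)
  have hγ₀ := hα₀.mul (hω.tail hr₀ hfin₀)
  have hγ₁ := hβ₁.head hr₁ hfin₁
  have hiso := (hγ₀.div hγ₁).monoQuasiIsometry (sub_pos.2 hσ') hφ
  obtain ⟨k, hk, L, hkL⟩ := hiso.exists_upper
  have hγ := ((hγ₀.rpow (sub_pos.2 hθ')).mul (hγ₁.rpow hθ)).mul (hα.comp hk hkL)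
  have hX₀ := interpolationClass_cumulativeNorm hα₀ hω hr₀ hq₀ hfin₀ hε σ N₀ N₁
  have hX₁ := interpolationClass_weightedNorm_one hβ₁ hr₁ hε N₀ N₁
  have hφW := eexp_mul_eq_of_eexp_eq hγ₁ hφ
  have hweight := eexp_neg_mul_mul_eq_of_eexp_eq hγ₀ hγ₁ hθ.le hφ α
  obtain ⟨A, hA, upper⟩ := hX₀.exists_weightedNorm_logK_le h₀ h₁ hε hX₁
    (profileSplits_endpoint hε.le hεσ (by linarith) (by linarith))
    (fun x => mul_ne_zero eexp_ne_zero (hγ₀.ne_zero x))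
    (fun x => ENNReal.mul_ne_top eexp_ne_top (hγ₀.ne_top x)) hiso hφW hα hγ hweight r
  obtain ⟨B, hB, lower⟩ :=
    hX₀.exists_weightedNorm_le_logK h₀ h₁ hX₁ hiso hφW hα hγ hweight r
  exact .of_le hA hB upper lower

lemma SlowlyVarying.slowWeight_div {a b : ℝ → ℝ} (hb : SlowlyVarying b) (ha : SlowlyVarying a) :
    SlowWeight fun x => ENNReal.ofReal (b (Real.exp x) / a (Real.exp x)) := by
  simpa only [ENNReal.ofReal_div_of_pos (ha.pos_exp _)] using
    hb.slowWeight.div ha.slowWeight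

lemma SlowWeight.ofReal_mul_toReal {γ : ℝ → ℝ≥0∞} (hγ : SlowWeight γ) {a : ℝ → ℝ}
    (ha : SlowlyVarying a) (x : ℝ) : ENNReal.ofReal (a (Real.exp x) * (γ x).toReal) =
      ENNReal.ofReal (a (Real.exp x)) * γ x := by
  rw [ENNReal.ofReal_mul (ha.pos_exp x).le, ENNReal.ofReal_toReal (hγ.ne_top x)]

lemma eexp_log_exp_rpow_mul_div {c d : ℝ} (hc : 0 < c) (hd : 0 < d) (s x : ℝ) :
    eexp (Real.log (Real.exp x ^ s * (c / d))) =
      eexp (s * x) * (ENNReal.ofReal c / ENNReal.ofReal d) := by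
  rw [eexp, Real.exp_log (by positivity), ofReal_exp_rpow_mul, ENNReal.ofReal_div_of_pos hd]

lemma ofReal_rpow_mul_rpow_mul {c d : ℝ} (hc : 0 < c) (hd : 0 < d) (s t y : ℝ) :
    ENNReal.ofReal (c ^ s * d ^ t * y) =
      ENNReal.ofReal c ^ s * ENNReal.ofReal d ^ t * ENNReal.ofReal y := by
  rw [ENNReal.ofReal_mul (by positivity), ENNReal.ofReal_mul (by positivity),
    ENNReal.ofReal_rpow_of_pos hc, ENNReal.ofReal_rpow_of_pos hd]

end ReiterationTheorem

theorem theorem12_general {V : Type*} [AddCommGroup V] {N₀ N₁ : V → ℝ≥0∞}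
    (h₀ : IsQuasiSeminorm N₀) (h₁ : IsQuasiSeminorm N₁)
    (θ θ₀ : ℝ) (hθ : 0 < θ) (hθ' : θ < 1) (hθ₀ : 0 < θ₀) (hθ₀' : θ₀ < 1)
    (q₀ r₀ r₁ r : ℝ≥0∞) (hq₀ : 0 < q₀) (hr₀ : 0 < r₀) (hr₁ : 0 < r₁) (hr : 0 < r)
    (a a₀ b₀ b₁ : ℝ → ℝ)
    (h_sv_a : SlowlyVarying a)
    (h_sv_a₀ : SlowlyVarying a₀)
    (h_sv_b₀ : SlowlyVarying b₀)
    (h_sv_b₁ : SlowlyVarying b₁)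
    (hfin₀ : LqNorm r₀ (Ioi 1) (svWgt r₀ (fun s => b₀ s / a₀ s)) ≠ ∞)
    (hfin₁ : LqNorm r₁ (Ioo 0 1) (svWgt r₁ (fun s => b₁ s)) ≠ ∞)
    (c₀ c₁ ρ : ℝ → ℝ)
    (hc₀ : ∀ t, c₀ t = a₀ t * (LqNorm r₀ (Ioi t) (svWgt r₀ (fun s => b₀ s / a₀ s))).toReal)
    (hc₁ : ∀ t, c₁ t = (LqNorm r₁ (Ioo 0 t) (svWgt r₁ (fun s => b₁ s))).toReal)
    (hρ : ∀ t, ρ t = t ^ (1 - θ₀) * (c₀ t / c₁ t)) :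
    EquivNorms
      (normK (normL N₀ N₁ θ₀ r₀ q₀ b₀ a₀) (normK N₀ N₁ 1 r₁ b₁) θ r a)
      (normK N₀ N₁ ((1 - θ) * θ₀ + θ) r
        (fun t => c₀ t ^ (1 - θ) * c₁ t ^ θ * a (ρ t))) := by
  rw [← Real.exp_zero] at hfin₀ hfin₁
  rw [LqNorm_Ioi_svWgt hr₀] at hfin₀
  rw [LqNorm_Ioo_svWgt hr₁] at hfin₁
  set α₀ : ℝ → ℝ≥0∞ := fun x => ENNReal.ofReal (a₀ (Real.exp x))
  set ω : ℝ → ℝ≥0∞ := fun x => ENNReal.ofReal (b₀ (Real.exp x) / a₀ (Real.exp x))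
  set β₁ : ℝ → ℝ≥0∞ := fun x => ENNReal.ofReal (b₁ (Real.exp x))
  have hω : SlowWeight ω := h_sv_b₀.slowWeight_div h_sv_a₀
  have htail := hω.tail hr₀.ne' hfin₀
  have hhead := h_sv_b₁.slowWeight.head hr₁.ne' hfin₁
  have ofReal_c₀ (x : ℝ) : ENNReal.ofReal (c₀ (Real.exp x)) = α₀ x * tailNorm r₀ ω x := by
    rw [hc₀, LqNorm_Ioi_svWgt hr₀, htail.ofReal_mul_toReal h_sv_a₀]
  have ofReal_c₁ (x : ℝ) : ENNReal.ofReal (c₁ (Real.exp x)) = headNorm r₁ β₁ x := by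
    rw [hc₁, LqNorm_Ioo_svWgt hr₁, ENNReal.ofReal_toReal (hhead.ne_top x)]
  have c₀_pos (x : ℝ) : 0 < c₀ (Real.exp x) := ENNReal.ofReal_pos.1 <| pos_iff_ne_zero.2 <|
    ofReal_c₀ x ▸ (h_sv_a₀.slowWeight.mul htail).ne_zero x
  have c₁_pos (x : ℝ) : 0 < c₁ (Real.exp x) := ENNReal.ofReal_pos.1 <| pos_iff_ne_zero.2 <|
    ofReal_c₁ x ▸ hhead.ne_zero x
  have eexp_log_ρ (x : ℝ) : eexp (Real.log (ρ (Real.exp x))) =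
      eexp ((1 - θ₀) * x) * (α₀ x * tailNorm r₀ ω x / headNorm r₁ β₁ x) := by
    rw [hρ, eexp_log_exp_rpow_mul_div (c₀_pos x) (c₁_pos x), ofReal_c₀, ofReal_c₁]
  have exp_log_ρ (x : ℝ) : Real.exp (Real.log (ρ (Real.exp x))) = ρ (Real.exp x) :=
    Real.exp_log <| by
      rw [hρ]; exact mul_pos (by positivity) (div_pos (c₀_pos x) (c₁_pos x))
  simpa only [funext (normK_eq_weightedNorm hr _ _ _ _), funext (normK_eq_weightedNorm hr₁ _ _ _ _),
    funext (normL_eq_cumulativeNorm hr₀ hq₀ _ _ _ _ _), exp_log_ρ, ofReal_c₀, ofReal_c₁,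
    ofReal_rpow_mul_rpow_mul (c₀_pos _) (c₁_pos _)] using
    equivNorms_weightedNorm_cumulativeNorm h₀ h₁ hθ hθ' hθ₀ hθ₀' hq₀.ne' hr₀.ne' hr₁.ne' r
      h_sv_a.slowWeight h_sv_a₀.slowWeight hω h_sv_b₁.slowWeight hfin₀ hfin₁ eexp_log_ρ

theorem theorem12
    (A₀ A₁ : QuasiBanach E)
    (hne : ∃ x : E, x ≠ 0 ∧ A₀.N x ≠ ∞ ∧ A₁.N x ≠ ∞)
    (θ θ₀ : ℝ) (hθ : 0 < θ) (hθ' : θ < 1) (hθ₀ : 0 < θ₀) (hθ₀' : θ₀ < 1)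
    (q₀ r₀ r₁ r : ℝ≥0∞) (hq₀ : 0 < q₀) (hr₀ : 0 < r₀) (hr₁ : 0 < r₁) (hr : 0 < r)
    (a a₀ b₀ b₁ : ℝ → ℝ)
    (h_sv_a : SlowlyVarying a)
    (h_sv_a₀ : SlowlyVarying a₀)
    (h_sv_b₀ : SlowlyVarying b₀)
    (h_sv_b₁ : SlowlyVarying b₁)
    (hfin₀ : LqNorm r₀ (Ioi 1) (svWgt r₀ (fun s => b₀ s / a₀ s)) ≠ ∞)
    (hfin₁ : LqNorm r₁ (Ioo 0 1) (svWgt r₁ (fun s => b₁ s)) ≠ ∞)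
    (c₀ c₁ ρ : ℝ → ℝ)
    (hc₀ : ∀ t, c₀ t = a₀ t * (LqNorm r₀ (Ioi t) (svWgt r₀ (fun s => b₀ s / a₀ s))).toReal)
    (hc₁ : ∀ t, c₁ t = (LqNorm r₁ (Ioo 0 t) (svWgt r₁ (fun s => b₁ s))).toReal)
    (hρ : ∀ t, ρ t = t ^ (1 - θ₀) * (c₀ t / c₁ t)) :
    EquivNorms
      (normK (normL A₀.N A₁.N θ₀ r₀ q₀ b₀ a₀) (normK A₀.N A₁.N 1 r₁ b₁) θ r a)
      (normK A₀.N A₁.N ((1 - θ) * θ₀ + θ) r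
        (fun t => c₀ t ^ (1 - θ) * c₁ t ^ θ * a (ρ t))) :=
  theorem12_general A₀.isQuasiSeminorm A₁.isQuasiSeminorm θ θ₀ hθ hθ' hθ₀ hθ₀' q₀ r₀ r₁ r hq₀ hr₀
    hr₁ hr a a₀ b₀ b₁ h_sv_a h_sv_a₀ h_sv_b₀ h_sv_b₁ hfin₀ hfin₁ c₀ c₁ ρ hc₀ hc₁ hρ
end
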